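/- arXiv:2102.12035 — 6 statements merged into one kernel-verified Lean document; each statement's English description precedes it below -/
import Mathlib

section
/- Proposition 1. For the Example distribution q_{X₁X₂Y}, the set of pairs (R₁,R₂) of nonnegative reals for which there exist finite sets 𝒯,𝒰₁,𝒰₂ and a pmf p(x₁,x₂,t,u₁,u₂,y) = p(x₁) p(x₂) p(t) p(u₁|x₁,t) p(u₂|x₂,t) p(y|u₁,u₂,t), whose (X₁,X₂)-marginal is that of four i.i.d. uniform bits and which satisfies ∑_{u₁,u₂} p(x₁,x₂,u₁,u₂,y|t) = q(x₁,x₂,y) for every t, with R₁ ≥ I(U₁;X₁|T) and R₂ ≥ I(U₂;X₂|T), is exactly the set { (R₁,R₂) : R₁ ≥ 1, R₂ ≥ 1, R₁+R₂ ≥ 3 }. -/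
/-!
Write `a x u = p(u | x, t)` for a fixed `t`. Because the inputs are uniform, `I(U₁;X₁|T)` equals
`2 - ∑ t, p(t) H(X₁ | U₁, T = t)` (`cmi_eq`), so the converse amounts to bounding the equivocations
`equiv a = H(X₁ | U₁, T = t)` and `equiv b = H(X₂ | U₂, T = t)` for every simulation scheme: each is
at most `1`, and their sum is at most `1`.

Every letter `u₁` is compatible with at most two values of `x₁`, since two inputs differing in both
bits cannot share a letter (`Scheme.share`); this gives `equiv a ≤ 1`. Call a letter merged if it is
compatible with two inputs; these agree in exactly one bit `j`. A merged letter forces the output to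
be `(X₁ⱼ, X₂ⱼ)` with that `j` (`Scheme.forced`). If both encoders have merged letters, then all
merged letters have the same `j`; since `(X₁ⱼ, X₂ⱼ)` is output with probability only `1/2` when one
of the inputs is `01`, merged letters have probability at most `1/2` for each input, so both
equivocations are at most `1/2`. If one encoder has no merged letter, its equivocation is `0` and
the other one is at most `1`.

For achievability, one encoder sends `(J, X_J)` and the other its whole input; time sharing between
the two choices of roles covers the segment joining the corner points `(1,2)` and `(2,1)`.
-/

open Finset

/-- A probability mass function on a finite type. -/
def IsPMF {α : Type*} [Fintype α] (p : α → ℝ) : Prop :=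
  (∀ a, 0 ≤ p a) ∧ ∑ a, p a = 1

/-- Marginal (pushforward) of a pmf `p` on `Ω` under the map `f`. -/
noncomputable def marg {Ω β : Type*} [Fintype Ω] [DecidableEq β]
    (p : Ω → ℝ) (f : Ω → β) (b : β) : ℝ :=
  ∑ ω : Ω, if f ω = b then p ω else 0

/-- Shannon entropy (in bits) of a pmf given as a function. -/
noncomputable def entPMF {β : Type*} [Fintype β] (r : β → ℝ) : ℝ :=
  -∑ b : β, r b * Real.logb 2 (r b)

/-- Entropy (in bits) of the random variable `f` under the joint pmf `p`. -/
noncomputable def ent {Ω β : Type*} [Fintype Ω] [Fintype β] [DecidableEq β]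
    (p : Ω → ℝ) (f : Ω → β) : ℝ :=
  entPMF (fun b => marg p f b)

/-- Conditional entropy `H(f | g)`. -/
noncomputable def condEnt {Ω β γ : Type*} [Fintype Ω] [Fintype β] [Fintype γ]
    [DecidableEq β] [DecidableEq γ] (p : Ω → ℝ) (f : Ω → β) (g : Ω → γ) : ℝ :=
  ent p (fun ω => (f ω, g ω)) - ent p g

/-- Mutual information `I(f ; g)`. -/
noncomputable def mi {Ω β γ : Type*} [Fintype Ω] [Fintype β] [Fintype γ]
    [DecidableEq β] [DecidableEq γ] (p : Ω → ℝ) (f : Ω → β) (g : Ω → γ) : ℝ :=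
  ent p f + ent p g - ent p (fun ω => (f ω, g ω))

/-- Conditional mutual information `I(f ; g | h)`. -/
noncomputable def cmi {Ω β γ δ : Type*} [Fintype Ω] [Fintype β] [Fintype γ] [Fintype δ]
    [DecidableEq β] [DecidableEq γ] [DecidableEq δ]
    (p : Ω → ℝ) (f : Ω → β) (g : Ω → γ) (h : Ω → δ) : ℝ :=
  ent p (fun ω => (f ω, h ω)) + ent p (fun ω => (g ω, h ω))
    - ent p (fun ω => (f ω, g ω, h ω)) - ent p h

/-- `bsel x j` is the `j`-th bit of the two-bit string `x`. -/
def bsel (x : Bool × Bool) (j : Fin 2) : Bool := if j = 0 then x.1 else x.2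

/-- The Example distribution: `X₁ = (X₁₁, X₁₂)` and `X₂ = (X₂₁, X₂₂)` are four i.i.d.
uniform bits, `J` is uniform on `{1,2}` independent of `(X₁, X₂)`, and
`Y = (X₁J, X₂J)`; `qEx` is the induced joint pmf of `(X₁, X₂, Y)`. -/
noncomputable def qEx : (Bool × Bool) × (Bool × Bool) × (Bool × Bool) → ℝ :=
  fun a => ∑ j : Fin 2,
    (1 / 32 : ℝ) * (if a.2.2 = (bsel a.1 j, bsel a.2.1 j) then 1 else 0)

/-! ### The function `z log₂ z` and equivocation -/

/-- `z log₂ z`, with value `0` at `z = 0`. -/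
noncomputable def xlog (z : ℝ) : ℝ := z * Real.logb 2 z

lemma xlog_mul (z w : ℝ) : xlog (z * w) = z * xlog w + w * xlog z := by
  unfold xlog
  rcases eq_or_ne z 0 with rfl | hz
  · simp
  rcases eq_or_ne w 0 with rfl | hw
  · simp
  rw [Real.logb_mul hz hw]; ring

@[simp] lemma xlog_zero : xlog 0 = 0 := by simp [xlog]

@[simp] lemma xlog_one : xlog 1 = 0 := by simp [xlog]

lemma xlog_half : xlog (1 / 2) = -(1 / 2) := by
  unfold xlog
  rw [one_div, Real.logb_inv, Real.logb_self_eq_one (by norm_num)]; norm_num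

lemma xlog_quarter : xlog (1 / 4) = -(1 / 2) := by
  rw [show (1 / 4 : ℝ) = 1 / 2 * (1 / 2) by norm_num, xlog_mul, xlog_half]; norm_num

/-- The binary entropy bound `h ≤ 1`, in homogeneous form. -/
lemma xlog_add_le {p q : ℝ} (hp : 0 ≤ p) (hq : 0 ≤ q) :
    xlog (p + q) - xlog p - xlog q ≤ p + q := by
  have hc := Real.convexOn_mul_log.2 hp hq (show (0 : ℝ) ≤ 1 / 2 by norm_num)
    (show (0 : ℝ) ≤ 1 / 2 by norm_num) (by norm_num)
  have h2 : 0 < Real.log 2 := Real.log_pos (by norm_num)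
  have hx : ∀ z, xlog z = z * Real.log z / Real.log 2 := fun z => by
    unfold xlog Real.logb; ring
  have hc' : xlog (1 / 2 * (p + q)) ≤ 1 / 2 * xlog p + 1 / 2 * xlog q := by
    rw [hx, hx, hx]
    simp only [smul_eq_mul] at hc
    rw [show 1 / 2 * (p + q) = 1 / 2 * p + 1 / 2 * q by ring]
    calc _ ≤ (1 / 2 * (p * Real.log p) + 1 / 2 * (q * Real.log q)) / Real.log 2 := by gcongr
      _ = _ := by ring
  rw [xlog_mul, xlog_half] at hc'
  linarith

/-- `s log₂ s - ∑ v log₂ v` with `s = ∑ v`: the entropy of the normalized weight `v / s`,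
multiplied by `s`. -/
noncomputable def phi (v : Bool × Bool → ℝ) : ℝ :=
  xlog (∑ x, v x) - ∑ x, xlog (v x)

/-- `H(X | U)` for a uniform two-bit input `X` and the channel `a x u = p(u | x)`. -/
noncomputable def equiv {U : Type} [Fintype U] (a : Bool × Bool → U → ℝ) : ℝ :=
  1 / 4 * ∑ u, phi (fun x => a x u)

lemma marg_sum {Ω β γ δ : Type*} [Fintype Ω] [Fintype γ]
    [DecidableEq β] [DecidableEq γ] [DecidableEq δ]
    (p : Ω → ℝ) (f : Ω → β) (g : Ω → γ) (h : Ω → δ) (u : β) (t : δ) :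
    marg p (fun ω => (f ω, h ω)) (u, t) = ∑ x, marg p (fun ω => (f ω, g ω, h ω)) (u, x, t) := by
  unfold marg
  rw [sum_comm]
  refine sum_congr rfl fun ω _ => ?_
  simp only [Prod.mk.injEq]
  by_cases h1 : f ω = u <;> by_cases h2 : h ω = t <;> simp [h1, h2]

lemma marg_sum_left {Ω β δ : Type*} [Fintype Ω] [Fintype β]
    [DecidableEq β] [DecidableEq δ]
    (p : Ω → ℝ) (f : Ω → β) (h : Ω → δ) (t : δ) :
    marg p h t = ∑ u, marg p (fun ω => (f ω, h ω)) (u, t) := by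
  unfold marg
  rw [sum_comm]
  refine sum_congr rfl fun ω _ => ?_
  simp only [Prod.mk.injEq]
  by_cases h2 : h ω = t <;> simp [h2]

lemma ent_eq {Ω β : Type*} [Fintype Ω] [Fintype β] [DecidableEq β] (p : Ω → ℝ) (f : Ω → β) :
    ent p f = -∑ b, xlog (marg p f b) := rfl

/-- For a uniform two-bit `X` independent of `T`, `I(U;X|T) = 2 - H(X|U,T)`. -/
lemma cmi_eq {Ω T U : Type} [Fintype Ω] [Fintype T] [Fintype U] [DecidableEq T] [DecidableEq U]
    (p : Ω → ℝ) (f : Ω → U) (g : Ω → Bool × Bool) (h : Ω → T)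
    (pT : T → ℝ) (a : Bool × Bool → T → U → ℝ) (hT : ∑ t, pT t = 1)
    (ha : ∀ x t, ∑ u, a x t u = 1)
    (hm : ∀ u x t, marg p (fun ω => (f ω, g ω, h ω)) (u, x, t) = pT t * (1 / 4) * a x t u) :
    cmi p f g h = 2 - ∑ t, pT t * equiv (fun x => a x t) := by
  have h1 : ∀ u t, marg p (fun ω => (f ω, h ω)) (u, t) = pT t * (1 / 4) * ∑ x, a x t u := by
    intro u t
    rw [marg_sum p f g h, mul_sum]
    exact sum_congr rfl fun x _ => hm u x t
  have h2 : ∀ x t, marg p (fun ω => (g ω, h ω)) (x, t) = pT t * (1 / 4) := by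
    intro x t
    rw [marg_sum_left p f, sum_congr rfl fun u _ => hm u x t, ← mul_sum, ha, mul_one]
  have h3 : ∀ t, marg p h t = pT t := by
    intro t
    rw [marg_sum_left p g, sum_congr rfl fun x _ => h2 x t]
    simp; ring
  have e1 : ent p (fun ω => (f ω, h ω)) - ent p (fun ω => (f ω, g ω, h ω))
      = -∑ t, pT t * equiv (fun x => a x t) := by
    rw [ent_eq, ent_eq]
    simp only [Fintype.sum_prod_type (α₁ := U), Fintype.sum_prod_type (α₁ := Bool × Bool)]
    simp_rw [h1, hm]
    rw [neg_sub_neg, ← sum_sub_distrib, ← sum_neg_distrib]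
    have : ∀ u, (∑ x, ∑ t, xlog (pT t * (1 / 4) * a x t u)
        - ∑ t, xlog (pT t * (1 / 4) * ∑ x, a x t u))
        = ∑ t, -(pT t * (1 / 4) * phi (fun x => a x t u)) := by
      intro u
      rw [sum_comm, ← sum_sub_distrib]
      refine sum_congr rfl fun t _ => ?_
      simp_rw [xlog_mul (pT t * (1 / 4)), sum_add_distrib, ← mul_sum, ← sum_mul]
      unfold phi; ring
    rw [sum_congr rfl fun u _ => this u, sum_comm]
    refine sum_congr rfl fun t _ => ?_
    unfold equiv
    rw [sum_neg_distrib, ← mul_sum]; ring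
  have e2 : ent p (fun ω => (g ω, h ω)) - ent p h = 2 := by
    rw [ent_eq, ent_eq]
    simp only [Fintype.sum_prod_type (α₁ := Bool × Bool)]
    simp_rw [h2, h3, xlog_mul, xlog_quarter, sum_add_distrib, ← mul_sum, ← sum_mul, hT]
    simp; ring
  unfold cmi
  linarith

/-! ### Bounds on the equivocation -/

/-- Some two distinct inputs both have positive weight. -/
def Merged (v : Bool × Bool → ℝ) : Prop := ∃ x x', x ≠ x' ∧ 0 < v x ∧ 0 < v x'

lemma phi_of_not_merged {v : Bool × Bool → ℝ} (h0 : ∀ x, 0 ≤ v x) (h : ¬ Merged v) :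
    phi v = 0 := by
  have key : ∀ x x', x ≠ x' → v x = 0 ∨ v x' = 0 := by
    intro x x' hx
    by_contra! hc
    exact h ⟨x, x', hx, (h0 x).lt_of_ne' hc.1, (h0 x').lt_of_ne' hc.2⟩
  by_cases hz : ∃ x, v x ≠ 0
  · obtain ⟨x, hx⟩ := hz
    have ho : ∀ x', x' ≠ x → v x' = 0 := fun x' hx' => (key x x' hx'.symm).resolve_left hx
    unfold phi
    rw [Fintype.sum_eq_single x ho, Fintype.sum_eq_single x fun x' hx' => by rw [ho x' hx', xlog_zero],
      sub_self]
  · push Not at hz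
    simp [phi, hz]

/-- If inputs differing in both bits never both have positive weight, at most two inputs do. -/
lemma phi_le {v : Bool × Bool → ℝ} (h0 : ∀ x, 0 ≤ v x)
    (h : ∀ x x', 0 < v x → 0 < v x' → ∃ j, bsel x j = bsel x' j) :
    phi v ≤ ∑ x, v x := by
  have k1 : v (true, true) = 0 ∨ v (false, false) = 0 := by
    by_contra! hc
    obtain ⟨j, hj⟩ := h _ _ ((h0 _).lt_of_ne' hc.1) ((h0 _).lt_of_ne' hc.2)
    revert hj; revert j; decide
  have k2 : v (true, false) = 0 ∨ v (false, true) = 0 := by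
    by_contra! hc
    obtain ⟨j, hj⟩ := h _ _ ((h0 _).lt_of_ne' hc.1) ((h0 _).lt_of_ne' hc.2)
    revert hj; revert j; decide
  have b := fun x x' => xlog_add_le (h0 x) (h0 x')
  simp only [phi, Fintype.sum_prod_type, Fintype.sum_bool]
  rcases k1 with k1 | k1 <;> rcases k2 with k2 | k2 <;> simp only [k1, k2] <;>
    simp only [xlog_zero, zero_add, add_zero]
  · linarith [b (false, true) (false, false)]
  · linarith [b (true, false) (false, false)]
  · linarith [b (true, true) (false, true)]
  · linarith [b (true, true) (true, false)]

/-! ### Simulation schemes -/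

/-- Encoders `a`, `b` and a decoder `d` that simulate the Example distribution exactly; this is the
data present for one value of the time-sharing variable. -/
structure Scheme {U V : Type} [Fintype U] [Fintype V] (a : Bool × Bool → U → ℝ)
    (b : Bool × Bool → V → ℝ) (d : U → V → Bool × Bool → ℝ) : Prop where
  ha : ∀ x, IsPMF (a x)
  hb : ∀ x, IsPMF (b x)
  hd : ∀ u v, IsPMF (d u v)
  sim : ∀ x1 x2 y, ∑ u, ∑ v, (1 / 16 : ℝ) * a x1 u * b x2 v * d u v y = qEx (x1, x2, y)

lemma IsPMF.exists_pos {α : Type*} [Fintype α] {p : α → ℝ} (h : IsPMF p) : ∃ a, 0 < p a := by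
  by_contra! hc
  have := sum_nonpos fun a (_ : a ∈ univ) => hc a
  rw [h.2] at this
  linarith

namespace Scheme

variable {U V : Type} [Fintype U] [Fintype V] {a : Bool × Bool → U → ℝ}
    {b : Bool × Bool → V → ℝ} {d : U → V → Bool × Bool → ℝ}

/-- Exchanging the two encoders and the two output bits. -/
lemma symm (S : Scheme a b d) : Scheme b a (fun v u y => d u v y.swap) where
  ha := S.hb
  hb := S.ha
  hd v u := by
    refine ⟨fun y => (S.hd u v).1 _, ?_⟩
    rw [← (S.hd u v).2]
    exact (Equiv.prodComm Bool Bool).sum_comp (d u v)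
  sim x1 x2 y := by
    have hq : qEx (x1, x2, y) = qEx (x2, x1, y.swap) := by
      unfold qEx
      refine sum_congr rfl fun j _ => ?_
      congr 2
      simp only [Prod.ext_iff, Prod.fst_swap, Prod.snd_swap, eq_iff_iff]
      exact and_comm
    rw [hq, ← S.sim, sum_comm]
    exact sum_congr rfl fun u _ => sum_congr rfl fun v _ => by ring

lemma term_nonneg (S : Scheme a b d) (x1 x2 y u v) :
    0 ≤ (1 / 16 : ℝ) * a x1 u * b x2 v * d u v y :=
  mul_nonneg (mul_nonneg (mul_nonneg (by norm_num) ((S.ha x1).1 u)) ((S.hb x2).1 v)) ((S.hd u v).1 y)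

lemma valid (S : Scheme a b d) {x1 x2 y u v} (h1 : 0 < a x1 u) (h2 : 0 < b x2 v)
    (h3 : 0 < d u v y) : ∃ j, y = (bsel x1 j, bsel x2 j) := by
  by_contra! hc
  have hq : qEx (x1, x2, y) = 0 := by simp [qEx, hc]
  rw [← S.sim, sum_eq_zero_iff_of_nonneg
    (fun u _ => sum_nonneg fun v _ => S.term_nonneg x1 x2 y u v)] at hq
  have := hq u (mem_univ _)
  rw [sum_eq_zero_iff_of_nonneg (fun v _ => S.term_nonneg x1 x2 y u v)] at this
  have := this v (mem_univ _)
  have : 0 < (1 / 16 : ℝ) * a x1 u * b x2 v * d u v y := by positivity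
  linarith

/-- Inputs sharing a letter agree in some bit. -/
lemma share (S : Scheme a b d) {x x' u} (h1 : 0 < a x u) (h2 : 0 < a x' u) :
    ∃ j, bsel x j = bsel x' j := by
  -- The other encoder has to be able to cope with input `01`.
  obtain ⟨v, hv⟩ := (S.hb (false, true)).exists_pos
  obtain ⟨y, hy⟩ := (S.hd u v).exists_pos
  have k1 := S.valid h1 hv hy
  have k2 := S.valid h2 hv hy
  clear hy h1 h2
  revert x x' y
  decide

/-- A letter compatible with two inputs that agree in bit `j` forces the output
`(X₁ⱼ, X₂ⱼ)`. -/
lemma forced (S : Scheme a b d) {x x' u v x2 y j} (hx : x ≠ x') (hj : bsel x j = bsel x' j)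
    (h1 : 0 < a x u) (h2 : 0 < a x' u) (hv : 0 < b x2 v) (hy : 0 < d u v y) :
    y = (bsel x j, bsel x2 j) := by
  have k1 := S.valid h1 hv hy
  have k2 := S.valid h2 hv hy
  clear hy h1 h2 hv
  revert x x' y x2 j
  decide +kernel

/-- Two merged letters, one for each encoder, preserve the same bit. -/
lemma same_type (S : Scheme a b d) {x x' u z z' v j k} (hx : x ≠ x') (hj : bsel x j = bsel x' j)
    (h1 : 0 < a x u) (h2 : 0 < a x' u) (hz : z ≠ z') (hk : bsel z k = bsel z' k)
    (h3 : 0 < b z v) (h4 : 0 < b z' v) : j = k := by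
  obtain ⟨y, hy⟩ := (S.hd u v).exists_pos
  have hy' : 0 < d u v (Prod.swap (Prod.swap y)) := by simpa using hy
  have c2 := S.symm.forced hz hk h3 h4 h1 hy'
  have c3 := S.symm.forced hz hk h3 h4 h2 hy'
  have c : bsel x k = bsel x' k := congrArg Prod.snd (c2.symm.trans c3)
  clear h1 h2 c2 c3 hk
  revert x x' j k
  decide

/-- If every merged letter of the first encoder preserves bit `j`, the first encoder uses merged
letters with probability at most `1/2`. -/
lemma merged_le_half (S : Scheme a b d) (j : Fin 2)
    (hj : ∀ u x x', x ≠ x' → 0 < a x u → 0 < a x' u → bsel x j = bsel x' j) (x : Bool × Bool)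
    [DecidablePred fun u => Merged fun x => a x u] :
    ∑ u with Merged (fun x => a x u), a x u ≤ 1 / 2 := by
  -- Against input `01`, the output determines which bit was selected.
  have hq : qEx (x, (false, true), (bsel x j, bsel (false, true) j)) = 1 / 32 := by
    fin_cases j <;> simp [qEx, bsel]
  rw [← S.sim] at hq
  have key : ∀ u, Merged (fun x => a x u) →
      ∑ v, (1 / 16 : ℝ) * a x u * b (false, true) v * d u v (bsel x j, bsel (false, true) j)
        = 1 / 16 * a x u := by
    intro u hM
    rcases ((S.ha x).1 u).eq_or_lt with h0 | h0
    · simp [← h0]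
    obtain ⟨x', hx', h0'⟩ : ∃ x', x ≠ x' ∧ 0 < a x' u := by
      obtain ⟨z, z', hz, h1, h2⟩ := hM
      by_cases h : x = z
      · exact ⟨z', h ▸ hz, h2⟩
      · exact ⟨z, h, h1⟩
    have : ∀ v, (1 / 16 : ℝ) * a x u * b (false, true) v * d u v (bsel x j, bsel (false, true) j)
        = 1 / 16 * a x u * b (false, true) v := by
      intro v
      rcases ((S.hb (false, true)).1 v).eq_or_lt with hb | hb
      · simp [← hb]
      have hd1 : d u v (bsel x j, bsel (false, true) j) = 1 := by
        rw [← (S.hd u v).2]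
        symm
        refine Fintype.sum_eq_single _ fun y hy => ?_
        by_contra hc
        exact hy (S.forced hx' (hj u x x' hx' h0 h0') h0 h0' hb (((S.hd u v).1 y).lt_of_ne' hc))
      rw [hd1, mul_one]
    rw [sum_congr rfl fun v _ => this v, ← mul_sum, (S.hb _).2, mul_one]
  have hle := sum_le_sum_of_subset_of_nonneg
    (filter_subset (fun u => Merged (fun x => a x u)) univ)
    (f := fun u => ∑ v, (1 / 16 : ℝ) * a x u * b (false, true) v *
      d u v (bsel x j, bsel (false, true) j))
    (fun u _ _ => sum_nonneg fun v _ => S.term_nonneg _ _ _ u v)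
  rw [hq, sum_congr rfl fun u hu => key u (mem_filter.1 hu).2, ← mul_sum] at hle
  linarith

lemma phi_le (S : Scheme a b d) (u : U) : phi (fun x => a x u) ≤ ∑ x, a x u :=
  _root_.phi_le (fun x => (S.ha x).1 u) fun _ _ => S.share

lemma equiv_le_one (S : Scheme a b d) : equiv a ≤ 1 := by
  have h := sum_le_sum fun u (_ : u ∈ univ) => S.phi_le u
  rw [sum_comm, sum_congr rfl fun x _ => (S.ha x).2] at h
  unfold equiv
  simp at h
  linarith

lemma equiv_le_half (S : Scheme a b d) (j : Fin 2)
    (hj : ∀ u x x', x ≠ x' → 0 < a x u → 0 < a x' u → bsel x j = bsel x' j) :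
    equiv a ≤ 1 / 2 := by
  classical
  have h : ∑ u, phi (fun x => a x u) ≤ ∑ u with Merged (fun x => a x u), ∑ x, a x u := by
    rw [sum_filter]
    refine sum_le_sum fun u _ => ?_
    split_ifs with hM
    · exact S.phi_le u
    · exact (phi_of_not_merged (fun x => (S.ha x).1 u) hM).le
  rw [sum_comm] at h
  have h' := h.trans (sum_le_sum fun x _ => S.merged_le_half j hj x)
  unfold equiv
  simp at h'
  linarith

lemma equiv_eq_zero (S : Scheme a b d) (h : ∀ u, ¬ Merged (fun x => a x u)) : equiv a = 0 := by
  simp [equiv, phi_of_not_merged (fun x => (S.ha x).1 _) (h _)]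

lemma equiv_add_le (S : Scheme a b d) : equiv a + equiv b ≤ 1 := by
  by_cases h1 : ∃ u, Merged (fun x => a x u)
  swap
  · push Not at h1
    linarith [S.equiv_eq_zero h1, S.symm.equiv_le_one]
  by_cases h2 : ∃ v, Merged (fun x => b x v)
  swap
  · push Not at h2
    linarith [S.symm.equiv_eq_zero h2, S.equiv_le_one]
  obtain ⟨u, x, x', hx, hu, hu'⟩ := h1
  obtain ⟨v, z, z', hz, hv, hv'⟩ := h2
  obtain ⟨j, hj⟩ := S.share hu hu'
  obtain ⟨k, hk⟩ := S.symm.share hv hv'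
  have hjk := S.same_type hx hj hu hu' hz hk hv hv'
  have A := S.equiv_le_half j fun w y y' hy h h' => by
    obtain ⟨i, hi⟩ := S.share h h'
    rwa [hjk, ← S.same_type hy hi h h' hz hk hv hv']
  have B := S.symm.equiv_le_half j fun w y y' hy h h' => by
    obtain ⟨i, hi⟩ := S.symm.share h h'
    rwa [S.same_type hx hj hu hu' hy hi h h']
  linarith

end Scheme

/-! ### Marginals of the factorized pmf -/

section Marginals

variable {T U1 U2 : Type} [Fintype T] [Fintype U1] [Fintype U2] [DecidableEq T] [DecidableEq U1]
  [DecidableEq U2] {pT : T → ℝ} {pU1c : Bool × Bool → T → U1 → ℝ} {pU2c : Bool × Bool → T → U2 → ℝ}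
  {pYc : U1 → U2 → T → Bool × Bool → ℝ}
  {p : (Bool × Bool) × (Bool × Bool) × T × U1 × U2 × (Bool × Bool) → ℝ}

lemma cmi_fst (hT : IsPMF pT) (h1 : ∀ x1 t, IsPMF (pU1c x1 t)) (h2 : ∀ x2 t, IsPMF (pU2c x2 t))
    (h3 : ∀ u1 u2 t, IsPMF (pYc u1 u2 t))
    (hp : ∀ x1 x2 t u1 u2 y, p (x1, x2, t, u1, u2, y) =
      (1 / 16 : ℝ) * pT t * pU1c x1 t u1 * pU2c x2 t u2 * pYc u1 u2 t y) :
    cmi p (fun ω => ω.2.2.2.1) (fun ω => ω.1) (fun ω => ω.2.2.1)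
      = 2 - ∑ t, pT t * equiv (fun x => pU1c x t) := by
  refine cmi_eq p _ _ _ pT pU1c hT.2 (fun x t => (h1 x t).2) fun u x t => ?_
  have e : ∀ x2, ∑ u2, ∑ y, p (x, x2, t, u, u2, y) = 1 / 16 * pT t * pU1c x t u := by
    intro x2
    simp_rw [hp, ← mul_sum, (h3 _ _ _).2, mul_one, ← mul_sum, (h2 _ _).2, mul_one]
  calc _ = ∑ x2, ∑ u2, ∑ y, p (x, x2, t, u, u2, y) := by
        unfold marg
        simp only [Fintype.sum_prod_type (α₁ := Bool × Bool), Fintype.sum_prod_type (α₁ := T),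
          Fintype.sum_prod_type (α₁ := U1), Fintype.sum_prod_type (α₁ := U2), Prod.mk.injEq]
        rw [Fintype.sum_eq_single x fun z hz => by simp [hz]]
        refine sum_congr rfl fun x2 _ => ?_
        rw [Fintype.sum_eq_single t fun z hz => by simp [hz],
          Fintype.sum_eq_single u fun z hz => by simp [hz]]
        simp
    _ = _ := by
        rw [sum_congr rfl fun x2 _ => e x2]
        simp; ring

lemma cmi_snd (hT : IsPMF pT) (h1 : ∀ x1 t, IsPMF (pU1c x1 t)) (h2 : ∀ x2 t, IsPMF (pU2c x2 t))
    (h3 : ∀ u1 u2 t, IsPMF (pYc u1 u2 t))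
    (hp : ∀ x1 x2 t u1 u2 y, p (x1, x2, t, u1, u2, y) =
      (1 / 16 : ℝ) * pT t * pU1c x1 t u1 * pU2c x2 t u2 * pYc u1 u2 t y) :
    cmi p (fun ω => ω.2.2.2.2.1) (fun ω => ω.2.1) (fun ω => ω.2.2.1)
      = 2 - ∑ t, pT t * equiv (fun x => pU2c x t) := by
  refine cmi_eq p _ _ _ pT pU2c hT.2 (fun x t => (h2 x t).2) fun u x t => ?_
  have e : ∀ x1, ∑ u1, ∑ y, p (x1, x, t, u1, u, y) = 1 / 16 * pT t * pU2c x t u := by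
    intro x1
    simp_rw [hp, ← mul_sum, (h3 _ _ _).2, mul_one, ← sum_mul, ← mul_sum, (h1 _ _).2, mul_one]
  calc _ = ∑ x1, ∑ u1, ∑ y, p (x1, x, t, u1, u, y) := by
        unfold marg
        simp only [Fintype.sum_prod_type (α₁ := Bool × Bool), Fintype.sum_prod_type (α₁ := T),
          Fintype.sum_prod_type (α₁ := U1), Fintype.sum_prod_type (α₁ := U2), Prod.mk.injEq]
        refine sum_congr rfl fun x1 _ => ?_
        rw [Fintype.sum_eq_single x fun z hz => by simp [hz],
          Fintype.sum_eq_single t fun z hz => by simp [hz]]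
        refine sum_congr rfl fun u1 _ => ?_
        rw [Fintype.sum_eq_single u fun z hz => by simp [hz]]
        simp
    _ = _ := by
        rw [sum_congr rfl fun x1 _ => e x1]
        simp; ring

end Marginals

/-! ### The corner point schemes -/

/-- The encoder that sends `(J, X_J)` with `J` a uniform bit; `J = false` selects the first bit. -/
noncomputable def halfEnc (x u : Bool × Bool) : ℝ :=
  if u.2 = (if u.1 then x.2 else x.1) then 1 / 2 else 0

/-- The encoder that sends its whole input. -/
noncomputable def fullEnc (x u : Bool × Bool) : ℝ := if u = x then 1 else 0

/-- The decoder for `halfEnc` and `fullEnc`: it outputs `X₁J` as received, and the bit of `X₂`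
selected by the received `J`. -/
noncomputable def cornerDec (u v y : Bool × Bool) : ℝ :=
  if y = (u.2, if u.1 then v.2 else v.1) then 1 else 0

lemma corner : Scheme halfEnc fullEnc cornerDec where
  ha x := by
    refine ⟨fun u => by unfold halfEnc; positivity, ?_⟩
    rcases x with ⟨_ | _, _ | _⟩ <;> simp [halfEnc, Fintype.sum_prod_type]
  hb x := ⟨fun u => by unfold fullEnc; positivity, by simp [fullEnc]⟩
  hd u v := ⟨fun y => by unfold cornerDec; positivity, by simp [cornerDec]⟩
  sim x1 x2 y := by
    simp only [fullEnc, cornerDec, qEx, halfEnc, Fin.sum_univ_two, Fintype.sum_prod_type (α₁ := Bool),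
      Fintype.sum_bool, bsel]
    rcases x1 with ⟨_ | _, _ | _⟩ <;> rcases x2 with ⟨_ | _, _ | _⟩ <;>
      rcases y with ⟨_ | _, _ | _⟩ <;> simp <;> norm_num

lemma equiv_fullEnc : equiv fullEnc = 0 := by
  simp [equiv, phi, fullEnc, Fintype.sum_prod_type]

lemma equiv_halfEnc : equiv halfEnc = 1 := by
  have h := xlog_half
  rw [one_div] at h
  simp [equiv, phi, halfEnc, Fintype.sum_prod_type, h]
  norm_num

/-- **Proposition 1.**  For the Example distribution `qEx`, the set of nonnegative rate
pairs `(R₁, R₂)` admitting finite auxiliary alphabets `T, U₁, U₂` and a pmf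
`p(x₁,x₂,t,u₁,u₂,y) = p(x₁) p(x₂) p(t) p(u₁|x₁,t) p(u₂|x₂,t) p(y|u₁,u₂,t)` (with
`(X₁,X₂)`-marginal four i.i.d. uniform bits) satisfying
`∑_{u₁,u₂} p(x₁,x₂,u₁,u₂,y|t) = q(x₁,x₂,y)` for every `t`, with `R₁ ≥ I(U₁;X₁|T)` and
`R₂ ≥ I(U₂;X₂|T)`, is exactly `{(R₁,R₂) : R₁ ≥ 1, R₂ ≥ 1, R₁+R₂ ≥ 3}`. -/
theorem example_communication_rate_region :
    {r : ℝ × ℝ | 0 ≤ r.1 ∧ 0 ≤ r.2 ∧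
      ∃ (T U1 U2 : Type) (_ : Fintype T) (_ : Fintype U1) (_ : Fintype U2)
        (_ : DecidableEq T) (_ : DecidableEq U1) (_ : DecidableEq U2)
        (pT : T → ℝ) (pU1c : Bool × Bool → T → U1 → ℝ)
        (pU2c : Bool × Bool → T → U2 → ℝ)
        (pYc : U1 → U2 → T → Bool × Bool → ℝ)
        (p : (Bool × Bool) × (Bool × Bool) × T × U1 × U2 × (Bool × Bool) → ℝ),
        IsPMF pT ∧
        (∀ x1 t, IsPMF (pU1c x1 t)) ∧
        (∀ x2 t, IsPMF (pU2c x2 t)) ∧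
        (∀ u1 u2 t, IsPMF (pYc u1 u2 t)) ∧
        (∀ x1 x2 t u1 u2 y,
          p (x1, x2, t, u1, u2, y) =
            (1 / 16 : ℝ) * pT t * pU1c x1 t u1 * pU2c x2 t u2 * pYc u1 u2 t y) ∧
        (∀ t x1 x2 y,
          (∑ u1 : U1, ∑ u2 : U2,
            (1 / 16 : ℝ) * pU1c x1 t u1 * pU2c x2 t u2 * pYc u1 u2 t y)
            = qEx (x1, x2, y)) ∧
        cmi p (fun ω => ω.2.2.2.1) (fun ω => ω.1) (fun ω => ω.2.2.1) ≤ r.1 ∧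
        cmi p (fun ω => ω.2.2.2.2.1) (fun ω => ω.2.1) (fun ω => ω.2.2.1) ≤ r.2}
    = {r : ℝ × ℝ | 1 ≤ r.1 ∧ 1 ≤ r.2 ∧ 3 ≤ r.1 + r.2} := by
  ext ⟨R1, R2⟩
  simp only [Set.mem_ofPred_eq]
  constructor
  · rintro ⟨-, -, T, U1, U2, _, _, _, _, _, _, pT, pU1c, pU2c, pYc, p, hT, h1, h2, h3, hp, hq,
      hR1, hR2⟩
    rw [cmi_fst hT h1 h2 h3 hp] at hR1
    rw [cmi_snd hT h1 h2 h3 hp] at hR2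
    have S : ∀ t, Scheme (fun x => pU1c x t) (fun x => pU2c x t) (fun u v => pYc u v t) :=
      fun t => ⟨fun x => h1 x t, fun x => h2 x t, fun u v => h3 u v t, hq t⟩
    -- Averages over `T` inherit pointwise upper bounds by `1`.
    have avg : ∀ c : T → ℝ, (∀ t, c t ≤ 1) → ∑ t, pT t * c t ≤ 1 := fun c hc => by
      rw [← hT.2]
      exact sum_le_sum fun t _ => mul_le_of_le_one_right (hT.1 t) (hc t)
    have b1 := avg _ fun t => (S t).equiv_le_one
    have b2 := avg _ fun t => (S t).symm.equiv_le_one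
    have b3 := avg _ fun t => (S t).equiv_add_le
    simp_rw [mul_add, sum_add_distrib] at b3
    exact ⟨by linarith, by linarith, by linarith⟩
  · rintro ⟨hR1, hR2, hR⟩
    -- The first encoder is the one sending `(J, X_J)` a fraction `l` of the time.
    obtain ⟨l, hl0, hl1, hlR1, hlR2⟩ : ∃ l : ℝ, 0 ≤ l ∧ l ≤ 1 ∧ 2 - l ≤ R1 ∧ 1 + l ≤ R2 := by
      rcases le_total R1 2 with h | h
      · exact ⟨2 - R1, by linarith, by linarith, by linarith, by linarith⟩
      · exact ⟨0, by norm_num, by norm_num, by linarith, by linarith⟩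
    let pT : Bool → ℝ := fun t => if t then l else 1 - l
    let pU1c : Bool × Bool → Bool → Bool × Bool → ℝ :=
      fun x t => if t then halfEnc x else fullEnc x
    let pU2c : Bool × Bool → Bool → Bool × Bool → ℝ :=
      fun x t => if t then fullEnc x else halfEnc x
    let pYc : Bool × Bool → Bool × Bool → Bool → Bool × Bool → ℝ :=
      fun u v t y => if t then cornerDec u v y else cornerDec v u y.swap
    have S : ∀ t, Scheme (fun x => pU1c x t) (fun x => pU2c x t) (fun u v => pYc u v t)
      | true => corner
      | false => corner.symm
    have hT : IsPMF pT := by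
      refine ⟨fun t => ?_, by simp [pT]⟩
      cases t
      · simpa [pT] using hl1
      · simpa [pT] using hl0
    have h1 : ∀ x t, IsPMF (pU1c x t) := fun x t => (S t).ha x
    have h2 : ∀ x t, IsPMF (pU2c x t) := fun x t => (S t).hb x
    have h3 : ∀ u v t, IsPMF (pYc u v t) := fun u v t => (S t).hd u v
    refine ⟨by linarith, by linarith, Bool, Bool × Bool, Bool × Bool, inferInstance, inferInstance,
      inferInstance, inferInstance, inferInstance, inferInstance, pT, pU1c, pU2c, pYc,
      fun ω => (1 / 16 : ℝ) * pT ω.2.2.1 * pU1c ω.1 ω.2.2.1 ω.2.2.2.1 *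
        pU2c ω.2.1 ω.2.2.1 ω.2.2.2.2.1 * pYc ω.2.2.2.1 ω.2.2.2.2.1 ω.2.2.1 ω.2.2.2.2.2,
      hT, h1, h2, h3, fun _ _ _ _ _ _ => rfl, fun t => (S t).sim, ?_, ?_⟩
    · rw [cmi_fst hT h1 h2 h3 fun _ _ _ _ _ _ => rfl]
      have e : ∑ t, pT t * equiv (fun x => pU1c x t) = l := by
        rw [Fintype.sum_bool]
        change l * equiv halfEnc + (1 - l) * equiv fullEnc = l
        rw [equiv_halfEnc, equiv_fullEnc]; ring
      rw [e]; exact hlR1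
    · rw [cmi_snd hT h1 h2 h3 fun _ _ _ _ _ _ => rfl]
      have e : ∑ t, pT t * equiv (fun x => pU2c x t) = 1 - l := by
        rw [Fintype.sum_bool]
        change l * equiv fullEnc + (1 - l) * equiv halfEnc = 1 - l
        rw [equiv_halfEnc, equiv_fullEnc]; ring
      rw [e]; linarith
end

section
/- Achievability of the corner point (2,1) in Proposition 1. There exist finite sets 𝒰₁,𝒰₂ and a joint pmf p(x₁,x₂,u₁,u₂,y) = p(x₁) p(x₂) p(u₁|x₁) p(u₂|x₂) p(y|u₁,u₂), whose (X₁,X₂)-marginal is that of four i.i.d. uniform bits and whose (X₁,X₂,Y)-marginal equals the Example distribution q_{X₁X₂Y}, such that I(U₁;X₁) = 2 and I(U₂;X₂) = 1. Concretely, U₁ = X₁ and U₂ = (J, X₂J) (with J uniform on {1,2} independent of (X₁,X₂)) yield such a pmf, and for this choice I(U₁;X₁) = H(X₁) = 2 and I(U₂;X₂) = I(J,X₂J;X₂) = 1. -/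
/-!
Take `U₁ = X₁`, `U₂ = (J, X₂J)` and `Y = (bit J of U₁, second component of U₂)`, with `J` a
uniform index. Summing out `U₁` and `U₂` leaves a sum over `J`, which is the Example distribution.

For any pmf of the required product form, the `(U₁, X₁)`-marginal is `p(u₁|x₁) / 4` and the
`(U₂, X₂)`-marginal is `p(u₂|x₂) / 4` (`marg_joint_fst`, `marg_joint_snd`). For the choice above
every distribution involved is uniform on its support, so each entropy is the logarithm of a support
size (`entPMF_flat`). The variables `X₁`, `U₁`, `(U₁, X₁)`, `X₂`, `U₂` are all uniform on 4 values,
and `(U₂, X₂)` on 8, so `I(U₁;X₁) = 2 + 2 - 2 = 2` and `I(U₂;X₂) = 2 + 2 - 3 = 1`.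
-/

open Finset

/-- The joint pmf with uniform `(X₁, X₂)` and conditional pmfs `A = p(u₁|x₁)`, `B = p(u₂|x₂)`,
`C = p(y|u₁,u₂)`. -/
noncomputable def jointPMF {U1 U2 : Type} (A : Bool × Bool → U1 → ℝ) (B : Bool × Bool → U2 → ℝ)
    (C : U1 → U2 → Bool × Bool → ℝ) :
    (Bool × Bool) × (Bool × Bool) × U1 × U2 × (Bool × Bool) → ℝ :=
  fun ω => (1 / 16 : ℝ) * A ω.1 ω.2.2.1 * B ω.2.1 ω.2.2.2.1 * C ω.2.2.1 ω.2.2.2.1 ω.2.2.2.2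

lemma marg_eq_sum_pair_left {Ω β γ : Type*} [Fintype Ω] [Fintype β] [DecidableEq β]
    [DecidableEq γ] (p : Ω → ℝ) (f : Ω → β) (g : Ω → γ) (b : γ) :
    marg p g b = ∑ a, marg p (fun ω => (f ω, g ω)) (a, b) := by
  unfold marg
  rw [sum_comm]
  refine sum_congr rfl fun ω _ => ?_
  simp [ite_and]

lemma marg_eq_sum_pair_right {Ω β γ : Type*} [Fintype Ω] [Fintype γ] [DecidableEq β]
    [DecidableEq γ] (p : Ω → ℝ) (f : Ω → β) (g : Ω → γ) (a : β) :
    marg p f a = ∑ b, marg p (fun ω => (f ω, g ω)) (a, b) := by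
  unfold marg
  rw [sum_comm]
  refine sum_congr rfl fun ω _ => ?_
  simp [ite_and]

lemma marg_joint_fst {U1 U2 : Type} [Fintype U1] [Fintype U2] [DecidableEq U1]
    {A : Bool × Bool → U1 → ℝ} {B : Bool × Bool → U2 → ℝ} {C : U1 → U2 → Bool × Bool → ℝ}
    (hB : ∀ x, IsPMF (B x)) (hC : ∀ u v, IsPMF (C u v)) (u : U1) (x : Bool × Bool) :
    marg (jointPMF A B C) (fun ω => (ω.2.2.1, ω.1)) (u, x) = 1 / 4 * A x u := by
  have h : marg (jointPMF A B C) (fun ω => (ω.2.2.1, ω.1)) (u, x)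
      = ∑ x2 : Bool × Bool, ∑ u2, ∑ y, 1 / 16 * A x u * B x2 u2 * C u u2 y := by
    unfold marg jointPMF
    rw [Fintype.sum_prod_type, sum_eq_single x (by intro b _ hb; simp [hb]) (by simp),
      Fintype.sum_prod_type]
    refine sum_congr rfl fun x2 _ => ?_
    rw [Fintype.sum_prod_type, sum_eq_single u (by intro b _ hb; simp [hb]) (by simp),
      Fintype.sum_prod_type]
    simp
  rw [h]
  simp_rw [← mul_sum, (hC _ _).2, mul_one, ← mul_sum, (hB _).2]
  simp
  ring

lemma marg_joint_snd {U1 U2 : Type} [Fintype U1] [Fintype U2] [DecidableEq U2]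
    {A : Bool × Bool → U1 → ℝ} {B : Bool × Bool → U2 → ℝ} {C : U1 → U2 → Bool × Bool → ℝ}
    (hA : ∀ x, IsPMF (A x)) (hC : ∀ u v, IsPMF (C u v)) (u : U2) (x : Bool × Bool) :
    marg (jointPMF A B C) (fun ω => (ω.2.2.2.1, ω.2.1)) (u, x) = 1 / 4 * B x u := by
  have h : marg (jointPMF A B C) (fun ω => (ω.2.2.2.1, ω.2.1)) (u, x)
      = ∑ x1 : Bool × Bool, ∑ u1, ∑ y, 1 / 16 * B x u * A x1 u1 * C u1 u y := by
    unfold marg jointPMF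
    rw [Fintype.sum_prod_type]
    refine sum_congr rfl fun x1 _ => ?_
    rw [Fintype.sum_prod_type, sum_eq_single x (by intro b _ hb; simp [hb]) (by simp),
      Fintype.sum_prod_type]
    refine sum_congr rfl fun u1 _ => ?_
    rw [Fintype.sum_prod_type, sum_eq_single u (by intro b _ hb; simp [hb]) (by simp)]
    refine sum_congr rfl fun y _ => ?_
    rw [if_pos rfl]
    ring
  rw [h]
  simp_rw [← mul_sum, (hC _ _).2, mul_one, ← mul_sum, (hA _).2]
  simp
  ring

/-- A pmf that is uniform on a support of size `2 ^ n` has entropy `n`. -/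
lemma entPMF_flat {β : Type*} [Fintype β] (P : β → Prop) [DecidablePred P] (n : ℕ)
    (hP : (univ.filter P).card = 2 ^ n) (r : β → ℝ)
    (hr : ∀ b, r b = if P b then (1 / 2 ^ n : ℝ) else 0) : entPMF r = n := by
  have hterm : ∀ b, r b * Real.logb 2 (r b) = if P b then -(n : ℝ) / 2 ^ n else 0 := by
    intro b
    rw [hr]
    split_ifs
    · rw [one_div, Real.logb_inv, Real.logb_pow, Real.logb_self_eq_one (by norm_num)]
      ring
    · simp
  unfold entPMF
  simp_rw [hterm]
  rw [← sum_filter, sum_const, hP, nsmul_eq_mul]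
  push_cast
  field_simp

/-- The conditional pmf of `U₁ = X₁` given `X₁`. -/
noncomputable def chan1 (x u : Bool × Bool) : ℝ := if u = x then 1 else 0

/-- The conditional pmf of `U₂ = (J, X₂J)` given `X₂`. -/
noncomputable def chan2 (x : Bool × Bool) (u : Fin 2 × Bool) : ℝ :=
  if u.2 = bsel x u.1 then 1 / 2 else 0

/-- The decoder: from `U₁ = X₁` and `U₂ = (J, X₂J)` it outputs `(X₁J, X₂J)`. -/
noncomputable def decY (u : Bool × Bool) (v : Fin 2 × Bool) (y : Bool × Bool) : ℝ :=
  if y = (bsel u v.1, v.2) then 1 else 0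

lemma isPMF_chan1 (x : Bool × Bool) : IsPMF (chan1 x) :=
  ⟨fun u => by unfold chan1; positivity, by simp [chan1]⟩

lemma isPMF_chan2 (x : Bool × Bool) : IsPMF (chan2 x) :=
  ⟨fun u => by unfold chan2; positivity, by
    simp only [chan2, Fintype.sum_prod_type, sum_ite_eq', mem_univ, if_true]
    norm_num⟩

lemma isPMF_decY (u : Bool × Bool) (v : Fin 2 × Bool) : IsPMF (decY u v) :=
  ⟨fun y => by unfold decY; positivity, by simp [decY]⟩

lemma sum_chan_eq_qEx (x1 x2 y : Bool × Bool) :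
    (∑ u1, ∑ u2, (1 / 16 : ℝ) * chan1 x1 u1 * chan2 x2 u2 * decY u1 u2 y) = qEx (x1, x2, y) := by
  rw [sum_eq_single x1 (by intro b _ hb; simp [chan1, hb]) (by simp), Fintype.sum_prod_type]
  refine sum_congr rfl fun j _ => ?_
  rw [sum_eq_single (bsel x2 j) (by intro b _ hb; simp [chan2, hb]) (by simp)]
  simp only [chan1, chan2, decY, if_true]
  norm_num

lemma mi_fst : mi (jointPMF chan1 chan2 decY) (fun ω => ω.2.2.1) (fun ω => ω.1) = 2 := by
  have hpair := marg_joint_fst (A := chan1) isPMF_chan2 isPMF_decY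
  have hU : ent (jointPMF chan1 chan2 decY) (fun ω => ω.2.2.1) = (2 : ℕ) := by
    refine entPMF_flat (fun _ => True) 2 (by decide) _ fun u => ?_
    rw [marg_eq_sum_pair_right _ _ (fun ω => ω.1)]
    simp_rw [hpair, chan1]
    simp
    norm_num
  have hX : ent (jointPMF chan1 chan2 decY) (fun ω => ω.1) = (2 : ℕ) := by
    refine entPMF_flat (fun _ => True) 2 (by decide) _ fun x => ?_
    rw [marg_eq_sum_pair_left _ (fun ω => ω.2.2.1)]
    simp_rw [hpair, ← mul_sum, (isPMF_chan1 _).2]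
    norm_num
  have hUX : ent (jointPMF chan1 chan2 decY) (fun ω => (ω.2.2.1, ω.1)) = (2 : ℕ) := by
    refine entPMF_flat (fun b => b.1 = b.2) 2 (by decide) _ fun ⟨u, x⟩ => ?_
    rw [hpair, chan1]
    split_ifs <;> norm_num
  rw [mi, hU, hX, hUX]
  norm_num

lemma mi_snd : mi (jointPMF chan1 chan2 decY) (fun ω => ω.2.2.2.1) (fun ω => ω.2.1) = 1 := by
  have hpair := marg_joint_snd (B := chan2) isPMF_chan1 isPMF_decY
  have hU : ent (jointPMF chan1 chan2 decY) (fun ω => ω.2.2.2.1) = (2 : ℕ) := by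
    refine entPMF_flat (fun _ => True) 2 (by decide) _ fun ⟨j, b⟩ => ?_
    rw [marg_eq_sum_pair_right _ _ (fun ω => ω.2.1)]
    simp_rw [hpair, chan2]
    fin_cases j <;> cases b <;> simp [Fintype.sum_prod_type, bsel] <;> norm_num
  have hX : ent (jointPMF chan1 chan2 decY) (fun ω => ω.2.1) = (2 : ℕ) := by
    refine entPMF_flat (fun _ => True) 2 (by decide) _ fun x => ?_
    rw [marg_eq_sum_pair_left _ (fun ω => ω.2.2.2.1)]
    simp_rw [hpair, ← mul_sum, (isPMF_chan2 _).2]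
    norm_num
  have hUX : ent (jointPMF chan1 chan2 decY) (fun ω => (ω.2.2.2.1, ω.2.1)) = (3 : ℕ) := by
    refine entPMF_flat (fun b => b.1.2 = bsel b.2 b.1.1) 3 (by decide) _ fun ⟨u, x⟩ => ?_
    rw [hpair, chan2]
    split_ifs <;> norm_num
  rw [mi, hU, hX, hUX]
  norm_num

/-- **Achievability of the corner point `(2,1)` in Proposition 1.**  There exist finite sets
`U₁, U₂` and a joint pmf `p(x₁,x₂,u₁,u₂,y) = p(x₁) p(x₂) p(u₁|x₁) p(u₂|x₂) p(y|u₁,u₂)`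
with `(X₁,X₂)`-marginal four i.i.d. uniform bits and `(X₁,X₂,Y)`-marginal equal to the
Example distribution `qEx`, such that `I(U₁;X₁) = 2` and `I(U₂;X₂) = 1`. -/
theorem example_corner_point_achievable :
    ∃ (U1 U2 : Type) (_ : Fintype U1) (_ : Fintype U2)
      (_ : DecidableEq U1) (_ : DecidableEq U2)
      (pU1c : Bool × Bool → U1 → ℝ) (pU2c : Bool × Bool → U2 → ℝ)
      (pYc : U1 → U2 → Bool × Bool → ℝ)
      (p : (Bool × Bool) × (Bool × Bool) × U1 × U2 × (Bool × Bool) → ℝ),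
      (∀ x1, IsPMF (pU1c x1)) ∧
      (∀ x2, IsPMF (pU2c x2)) ∧
      (∀ u1 u2, IsPMF (pYc u1 u2)) ∧
      (∀ x1 x2 u1 u2 y,
        p (x1, x2, u1, u2, y) = (1 / 16 : ℝ) * pU1c x1 u1 * pU2c x2 u2 * pYc u1 u2 y) ∧
      (∀ x1 x2 y,
        (∑ u1 : U1, ∑ u2 : U2, (1 / 16 : ℝ) * pU1c x1 u1 * pU2c x2 u2 * pYc u1 u2 y)
          = qEx (x1, x2, y)) ∧
      mi p (fun ω => ω.2.2.1) (fun ω => ω.1) = 2 ∧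
      mi p (fun ω => ω.2.2.2.1) (fun ω => ω.2.1) = 1 := by
  exact ⟨Bool × Bool, Fin 2 × Bool, inferInstance, inferInstance, inferInstance, inferInstance,
    chan1, chan2, decY, jointPMF chan1 chan2 decY, isPMF_chan1, isPMF_chan2, isPMF_decY,
    fun _ _ _ _ _ => rfl, sum_chan_eq_qEx, mi_fst, mi_snd⟩
end

section
/- Claim 1. Let 𝒰₁,𝒰₂ be finite sets and let p be a joint pmf of the form p(x₁,x₂,u₁,u₂,y) = p(x₁) p(x₂) p(u₁|x₁) p(u₂|x₂) p(y|u₁,u₂), whose (X₁,X₂)-marginal is that of four i.i.d. uniform bits and whose (X₁,X₂,Y)-marginal equals the Example distribution q_{X₁X₂Y}. If H(X₁|U₁) > 0 and H(X₂|U₂) > 0, then there exists k ∈ {1,2} such that for every u₁ with P(U₁=u₁) > 0 and every u₂ with P(U₂=u₂) > 0, one has H(X₁ₖ|U₁=u₁) = 0 and H(X₂ₖ|U₂=u₂) = 0. -/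
/-! Only supports matter. For each pair `(u₁, u₂)` some output `y` has `p(y | u₁, u₂) > 0`, and
by the marginal constraint `y` must equal `(x₁ₖ, x₂ₖ)` for some `k`, for all `x₁`, `x₂` compatible
with `u₁`, `u₂` (`k` may depend on `x₁, x₂`). Since `H(X₁|U₁) > 0`, some `u₁` is compatible with
two strings `x ≠ x'`. If they agree in exactly one bit `k`, then `y₁` is that common bit, and the
one of `x, x'` whose other bit is wrong forces `y₂ = x₂ₖ`; hence every `u₂` determines the bit `k`
of `X₂`. If they are antipodal, either no `y₁` suits both, or `{x, x'} = {01, 10}` and both bits of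
`x₂` equal `y₂`, so that every `u₂` determines `X₂` entirely, against `H(X₂|U₂) > 0`
(`agree_of_common_output`). A `u₂` compatible with two strings then has them agreeing exactly in
bit `k`, and exchanging the users shows that every `u₁` determines the bit `k` of `X₁`
(`exists_determined_bit`). -/

open Finset

/-- The conditional pmf of `f` given the event `g = c`, under the joint pmf `p`. -/
noncomputable def condPMF {Ω β γ : Type*} [Fintype Ω] [DecidableEq β] [DecidableEq γ]
    (p : Ω → ℝ) (f : Ω → β) (g : Ω → γ) (c : γ) : β → ℝ :=
  fun b => marg p (fun ω => (f ω, g ω)) (b, c) / marg p g c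

theorem marg_pair_eq_marg {Ω β γ : Type*} [Fintype Ω] [DecidableEq β] [DecidableEq γ]
    (p : Ω → ℝ) (f : Ω → β) (g : Ω → γ) (b : β) (c : γ)
    (h : ∀ ω, g ω = c → p ω ≠ 0 → f ω = b) :
    marg p (fun ω => (f ω, g ω)) (b, c) = marg p g c := by
  unfold marg
  refine Finset.sum_congr rfl fun ω _ => ?_
  by_cases h1 : g ω = c
  · by_cases h2 : p ω = 0
    · simp [h2]
    · simp [h1, h ω h1 h2]
  · simp [h1]

theorem marg_pair_eq_zero {Ω β γ : Type*} [Fintype Ω] [DecidableEq β] [DecidableEq γ]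
    (p : Ω → ℝ) (f : Ω → β) (g : Ω → γ) (b : β) (c : γ)
    (h : ∀ ω, f ω = b → g ω = c → p ω ≠ 0 → False) :
    marg p (fun ω => (f ω, g ω)) (b, c) = 0 := by
  unfold marg
  refine Finset.sum_eq_zero fun ω _ => ?_
  split_ifs with h1
  · rw [Prod.mk.injEq] at h1
    by_contra h2
    exact h ω h1.1 h1.2 h2
  · rfl

/-- If `H(f | g) > 0`, some value of `g` is
attained together with two different values of `f`, at points of nonzero mass. -/
theorem exists_ne_of_condEnt_pos {Ω β γ : Type*} [Fintype Ω] [Fintype β] [Fintype γ]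
    [DecidableEq β] [DecidableEq γ] (p : Ω → ℝ) (f : Ω → β) (g : Ω → γ)
    (h : 0 < condEnt p f g) :
    ∃ ω ω', g ω = g ω' ∧ f ω ≠ f ω' ∧ p ω ≠ 0 ∧ p ω' ≠ 0 := by
  by_contra hcon
  have key : ∀ ω ω', g ω = g ω' → p ω ≠ 0 → p ω' ≠ 0 → f ω = f ω' := by
    intro ω ω' h1 h2 h3
    by_contra h4
    exact hcon ⟨ω, ω', h1, h4, h2, h3⟩
  have hsum : ∀ c, ∑ b, marg p (fun ω => (f ω, g ω)) (b, c)
        * Real.logb 2 (marg p (fun ω => (f ω, g ω)) (b, c))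
      = marg p g c * Real.logb 2 (marg p g c) := by
    intro c
    by_cases hc : ∃ ω, g ω = c ∧ p ω ≠ 0
    · obtain ⟨ω₀, hg, hp⟩ := hc
      rw [Finset.sum_eq_single (f ω₀)]
      · rw [marg_pair_eq_marg p f g (f ω₀) c]
        intro ω h1 h2
        exact key ω ω₀ (h1.trans hg.symm) h2 hp
      · intro b _ hb
        rw [marg_pair_eq_zero, zero_mul]
        intro ω h1 h2 h3
        exact hb (h1.symm.trans (key ω ω₀ (h2.trans hg.symm) h3 hp))
      · intro hn
        exact absurd (Finset.mem_univ _) hn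
    · have hz : ∀ ω, g ω = c → p ω = 0 := by
        intro ω h1
        by_contra h2
        exact hc ⟨ω, h1, h2⟩
      have hm : marg p g c = 0 := by
        unfold marg
        refine Finset.sum_eq_zero fun ω _ => ?_
        split_ifs with h1
        · exact hz ω h1
        · rfl
      rw [hm, zero_mul]
      refine Finset.sum_eq_zero fun b _ => ?_
      rw [marg_pair_eq_zero, zero_mul]
      intro ω _ h2 h3
      exact h3 (hz ω h2)
  have hzero : condEnt p f g = 0 := by
    unfold condEnt ent entPMF
    rw [Fintype.sum_prod_type_right]
    simp only [hsum]
    ring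
  exact absurd h (by rw [hzero]; exact lt_irrefl 0)

theorem entPMF_condPMF_eq_zero {Ω β γ : Type*} [Fintype Ω] [Fintype β]
    [DecidableEq β] [DecidableEq γ] (p : Ω → ℝ) (f : Ω → β) (g : Ω → γ) (c : γ)
    (hc : 0 < marg p g c)
    (h : ∀ ω ω', g ω = c → g ω' = c → p ω ≠ 0 → p ω' ≠ 0 → f ω = f ω') :
    entPMF (condPMF p f g c) = 0 := by
  obtain ⟨ω₀, hg, hp⟩ : ∃ ω, g ω = c ∧ p ω ≠ 0 := by
    obtain ⟨ω, -, hω⟩ := Finset.exists_ne_zero_of_sum_ne_zero hc.ne'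
    refine ⟨ω, ?_⟩
    by_cases h1 : g ω = c
    · exact ⟨h1, by simpa [h1] using hω⟩
    · simp [h1] at hω
  unfold entPMF condPMF
  rw [neg_eq_zero]
  refine Finset.sum_eq_zero fun b _ => ?_
  by_cases hb : b = f ω₀
  · rw [marg_pair_eq_marg p f g b c, div_self hc.ne', Real.logb_one, mul_zero]
    intro ω h1 h2
    exact (h ω ω₀ h1 hg h2 hp).trans hb.symm
  · rw [marg_pair_eq_zero, zero_div, zero_mul]
    intro ω h1 h2 h3
    exact hb (h1.symm.trans (h ω ω₀ h2 hg h3 hp))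

/-- The index of a bit on which two strings agree; the value `1` for antipodal strings is a
placeholder. -/
def agreeBit (x x' : Bool × Bool) : Fin 2 := if x.1 = x'.1 then 0 else 1

/-- If `x ≠ x'` and one output `y` is admissible for all four pairs from `{x, x'} × {z, z'}`,
then `z, z'` agree in the bit where `x, x'` agree: whichever of `x, x'` differs from `y.1` in its
other bit forces `y.2` to be that bit of `z` and of `z'`. When `x, x'` are antipodal, the
hypotheses even force `z = z'`. -/
theorem agree_of_common_output : ∀ x x' z z' y : Bool × Bool, x ≠ x' →
    (∃ k, y = (bsel x k, bsel z k)) → (∃ k, y = (bsel x k, bsel z' k)) →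
    (∃ k, y = (bsel x' k, bsel z k)) → (∃ k, y = (bsel x' k, bsel z' k)) →
    bsel z (agreeBit x x') = bsel z' (agreeBit x x') := by
  decide +kernel

theorem agreeBit_eq : ∀ (x x' : Bool × Bool) (k : Fin 2), x ≠ x' → bsel x k = bsel x' k →
    agreeBit x x' = k := by
  decide +kernel

/-- The claim at the level of supports: `S1 u1 x` and `S2 u2 z` say that `u1`, `u2` are compatible
with the strings `x`, `z`. -/
theorem exists_determined_bit {U1 U2 : Type*} (S1 : U1 → Bool × Bool → Prop)
    (S2 : U2 → Bool × Bool → Prop)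
    (H : ∀ u1 u2, ∃ y : Bool × Bool, ∀ x z, S1 u1 x → S2 u2 z →
      ∃ k, y = (bsel x k, bsel z k))
    (h1 : ∃ u1 x x', x ≠ x' ∧ S1 u1 x ∧ S1 u1 x')
    (h2 : ∃ u2 z z', z ≠ z' ∧ S2 u2 z ∧ S2 u2 z') :
    ∃ k, (∀ u1 x x', S1 u1 x → S1 u1 x' → bsel x k = bsel x' k) ∧
      (∀ u2 z z', S2 u2 z → S2 u2 z' → bsel z k = bsel z' k) := by
  obtain ⟨u1, x, x', hx, hSx, hSx'⟩ := h1
  obtain ⟨u2, z, z', hz, hSz, hSz'⟩ := h2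
  have A : ∀ u2 w w', S2 u2 w → S2 u2 w' →
      bsel w (agreeBit x x') = bsel w' (agreeBit x x') := by
    intro v w w' hw hw'
    obtain ⟨y, hy⟩ := H u1 v
    exact agree_of_common_output x x' w w' y hx (hy x w hSx hw) (hy x w' hSx hw')
      (hy x' w hSx' hw) (hy x' w' hSx' hw')
  refine ⟨agreeBit x x', ?_, A⟩
  intro v w w' hw hw'
  obtain ⟨y, hy⟩ := H v u2
  -- The same bit is selected by `z, z'`, and the argument runs with the two users exchanged.
  rw [← agreeBit_eq z z' _ hz (A u2 z z' hSz hSz')]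
  have sw : ∀ a b, S1 v a → S2 u2 b → ∃ k, (y.2, y.1) = (bsel b k, bsel a k) := by
    intro a b ha hb
    obtain ⟨k, hk⟩ := hy a b ha hb
    exact ⟨k, by rw [hk]⟩
  have agree := agree_of_common_output z z' w w' (y.2, y.1) hz (sw w z hw hSz) (sw w' z hw' hSz)
    (sw w z' hw hSz') (sw w' z' hw' hSz')
  exact agree

/-- **Claim 1.**  For any joint pmf
`p(x₁,x₂,u₁,u₂,y) = p(x₁) p(x₂) p(u₁|x₁) p(u₂|x₂) p(y|u₁,u₂)` with `(X₁,X₂)`-marginal four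
i.i.d. uniform bits and `(X₁,X₂,Y)`-marginal equal to the Example distribution `qEx`, if
`H(X₁|U₁) > 0` and `H(X₂|U₂) > 0` then there is a `k ∈ {1,2}` such that for all `u₁, u₂` of
positive probability, `H(X₁ₖ|U₁=u₁) = 0` and `H(X₂ₖ|U₂=u₂) = 0`. -/
theorem example_claim1
    {U1 U2 : Type} [Fintype U1] [Fintype U2] [DecidableEq U1] [DecidableEq U2]
    (pU1c : Bool × Bool → U1 → ℝ) (pU2c : Bool × Bool → U2 → ℝ)
    (pYc : U1 → U2 → Bool × Bool → ℝ)
    (hpU1 : ∀ x1, IsPMF (pU1c x1)) (hpU2 : ∀ x2, IsPMF (pU2c x2))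
    (hpY : ∀ u1 u2, IsPMF (pYc u1 u2))
    (p : (Bool × Bool) × (Bool × Bool) × U1 × U2 × (Bool × Bool) → ℝ)
    (hpdef : ∀ x1 x2 u1 u2 y,
      p (x1, x2, u1, u2, y) = (1 / 16 : ℝ) * pU1c x1 u1 * pU2c x2 u2 * pYc u1 u2 y)
    (hmarg : ∀ x1 x2 y,
      (∑ u1 : U1, ∑ u2 : U2, (1 / 16 : ℝ) * pU1c x1 u1 * pU2c x2 u2 * pYc u1 u2 y)
        = qEx (x1, x2, y))
    (hH1 : 0 < condEnt p (fun ω => ω.1) (fun ω => ω.2.2.1))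
    (hH2 : 0 < condEnt p (fun ω => ω.2.1) (fun ω => ω.2.2.2.1)) :
    ∃ k : Fin 2,
      (∀ u1 : U1, 0 < marg p (fun ω => ω.2.2.1) u1 →
        entPMF (condPMF p (fun ω => bsel ω.1 k) (fun ω => ω.2.2.1) u1) = 0) ∧
      (∀ u2 : U2, 0 < marg p (fun ω => ω.2.2.2.1) u2 →
        entPMF (condPMF p (fun ω => bsel ω.2.1 k) (fun ω => ω.2.2.2.1) u2) = 0) := by
  have hne : ∀ ω, p ω ≠ 0 → pU1c ω.1 ω.2.2.1 ≠ 0 ∧ pU2c ω.2.1 ω.2.2.2.1 ≠ 0 := by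
    rintro ⟨x1, x2, u1, u2, y⟩ h
    rw [hpdef] at h
    constructor <;> intro h0 <;> simp only at h0 <;> simp [h0] at h
  have H : ∀ u1 u2, ∃ y : Bool × Bool, ∀ x z, pU1c x u1 ≠ 0 → pU2c z u2 ≠ 0 →
      ∃ k, y = (bsel x k, bsel z k) := by
    intro u1 u2
    obtain ⟨y, -, hy⟩ := Finset.exists_ne_zero_of_sum_ne_zero
      (by rw [(hpY u1 u2).2]; exact one_ne_zero : ∑ y, pYc u1 u2 y ≠ 0)
    refine ⟨y, fun x z hx hz => ?_⟩
    have hnn : ∀ v1 v2, 0 ≤ (1 / 16 : ℝ) * pU1c x v1 * pU2c z v2 * pYc v1 v2 y := by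
      intro v1 v2
      have := (hpU1 x).1 v1
      have := (hpU2 z).1 v2
      have := (hpY v1 v2).1 y
      positivity
    -- The marginal constraint gives `q(x, z, y) > 0`, so `y` is an output of the Example.
    have hq : qEx (x, z, y) ≠ 0 := by
      rw [← hmarg x z y]
      intro h0
      rw [Finset.sum_eq_zero_iff_of_nonneg
        (fun v1 _ => Finset.sum_nonneg fun v2 _ => hnn v1 v2)] at h0
      have h1 := h0 u1 (Finset.mem_univ _)
      rw [Finset.sum_eq_zero_iff_of_nonneg (fun v2 _ => hnn u1 v2)] at h1
      have h2 := h1 u2 (Finset.mem_univ _)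
      simp [hx, hz, hy] at h2
    obtain ⟨k, -, hk⟩ := Finset.exists_ne_zero_of_sum_ne_zero hq
    refine ⟨k, ?_⟩
    by_contra h0
    simp [h0] at hk
  obtain ⟨ω, ω', hg, hf, hp, hp'⟩ := exists_ne_of_condEnt_pos p _ _ hH1
  obtain ⟨τ, τ', hg2, hf2, hp2, hp2'⟩ := exists_ne_of_condEnt_pos p _ _ hH2
  obtain ⟨k, hk1, hk2⟩ := exists_determined_bit (fun u x => pU1c x u ≠ 0)
    (fun u x => pU2c x u ≠ 0) H
    ⟨ω.2.2.1, ω.1, ω'.1, hf, (hne ω hp).1, by rw [hg]; exact (hne ω' hp').1⟩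
    ⟨τ.2.2.2.1, τ.2.1, τ'.2.1, hf2, (hne τ hp2).2, by rw [hg2]; exact (hne τ' hp2').2⟩
  refine ⟨k, fun u1 hu1 => ?_, fun u2 hu2 => ?_⟩
  · refine entPMF_condPMF_eq_zero p _ _ u1 hu1 fun a a' ha ha' hpa hpa' => ?_
    refine hk1 u1 _ _ ?_ ?_
    · rw [← ha]; exact (hne a hpa).1
    · rw [← ha']; exact (hne a' hpa').1
  · refine entPMF_condPMF_eq_zero p _ _ u2 hu2 fun a a' ha ha' hpa hpa' => ?_
    refine hk2 u2 _ _ ?_ ?_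
    · rw [← ha]; exact (hne a hpa).2
    · rw [← ha']; exact (hne a' hpa').2
end

section
/- Single-letter converse for the example with encoder shared randomness. Let 𝒰 be a finite set and let p be a joint pmf of the form p(x₁,x₂,u,y) = p(x₁) p(x₂) p(u|x₁) p(y|u,x₂), whose (X₁,X₂)-marginal is that of four i.i.d. uniform bits and whose (X₁,X₂,Y)-marginal equals the Example distribution q_{X₁X₂Y}. Then I(U;X₁) ≥ 1. -/
/-!
Feeding the decoder the input `x₂ = (0,1)` makes the second coordinate of `Y` reveal which
index `J` was used. Hence every output that the decoder produces with positive probability from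
`(u, (0,1))` pins down one of the two bits of `X₁`, and the same bit for every `x₁` compatible
with `u`: each message `u` leaves at most two candidates for `X₁` (`support_of_message`).
Therefore `H(X₁ | U) ≤ 1`, which is midpoint convexity of `x ↦ x log x` applied for each `u`
(`two_point_entropy`), and `I(U;X₁) = 2 - H(X₁ | U) ≥ 1`.
-/

open Finset

/-- A two-point measure with masses `a`, `b` has (unnormalized) entropy at most one bit. -/
lemma two_point_entropy {a b : ℝ} (ha : 0 ≤ a) (hb : 0 ≤ b) :
    (a + b) * Real.logb 2 (a + b) - (a + b)
      ≤ a * Real.logb 2 a + b * Real.logb 2 b := by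
  have hl : 0 < Real.log 2 := Real.log_pos one_lt_two
  have key : (a + b) * Real.log (a + b) - (a + b) * Real.log 2
      ≤ a * Real.log a + b * Real.log b := by
    rcases eq_or_lt_of_le (add_nonneg ha hb) with h | h
    · have ha0 : a = 0 := by linarith
      have hb0 : b = 0 := by linarith
      simp [ha0, hb0]
    · have hc := Real.convexOn_mul_log.2 (Set.mem_Ici.2 ha) (Set.mem_Ici.2 hb)
        (by norm_num : (0 : ℝ) ≤ 1 / 2) (by norm_num : (0 : ℝ) ≤ 1 / 2) (by norm_num)
      simp only [smul_eq_mul] at hc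
      rw [show (1 / 2 : ℝ) * a + 1 / 2 * b = (a + b) / 2 by ring,
        Real.log_div h.ne' two_ne_zero] at hc
      linarith
  have e : ∀ x : ℝ, Real.logb 2 x = Real.log x / Real.log 2 := fun _ => rfl
  rw [e, e, e, ← sub_nonneg]
  have : a * (Real.log a / Real.log 2) + b * (Real.log b / Real.log 2)
      - ((a + b) * (Real.log (a + b) / Real.log 2) - (a + b))
      = (a * Real.log a + b * Real.log b
        - ((a + b) * Real.log (a + b) - (a + b) * Real.log 2)) / Real.log 2 := by
    field_simp
  rw [this]
  exact div_nonneg (by linarith) hl.le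

/-- Each message `u` determines the first or the second bit of `X₁`. -/
lemma support_of_message {U : Type} [Fintype U]
    (pUc : Bool × Bool → U → ℝ) (pYc : U → Bool × Bool → Bool × Bool → ℝ)
    (hpU : ∀ x1, IsPMF (pUc x1)) (hpY : ∀ u x2, IsPMF (pYc u x2))
    (hmarg : ∀ x1 x2 y,
      (∑ u : U, (1 / 16 : ℝ) * pUc x1 u * pYc u x2 y) = qEx (x1, x2, y)) (u : U) :
    (∃ c, ∀ d, pUc (c, d) u = 0) ∨ (∃ d, ∀ c, pUc (c, d) u = 0) := by
  obtain ⟨y, hy⟩ : ∃ y, pYc u (false, true) y ≠ 0 := by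
    by_contra! h
    have := (hpY u (false, true)).2
    simp [h] at this
  have key : ∀ x, qEx (x, (false, true), y) = 0 → pUc x u = 0 := by
    intro x hx
    rw [← hmarg, Finset.sum_eq_zero_iff_of_nonneg] at hx
    · simpa [hy] using hx u (mem_univ u)
    · intro v _
      exact mul_nonneg (mul_nonneg (by norm_num) ((hpU x).1 v)) ((hpY v _).1 y)
  obtain ⟨b, j⟩ := y
  cases j
  · exact Or.inl ⟨!b, fun d => key _ (by simp [qEx, bsel])⟩
  · exact Or.inr ⟨!b, fun c => key _ (by simp [qEx, bsel])⟩

/-- The law of any function of `(U, X₁)`, with `X₂` and `Y` summed out. -/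
lemma marg_message_source {U β : Type} [Fintype U] [DecidableEq β]
    (pUc : Bool × Bool → U → ℝ) (pYc : U → Bool × Bool → Bool × Bool → ℝ)
    (hpY : ∀ u x2, IsPMF (pYc u x2))
    (p : (Bool × Bool) × (Bool × Bool) × U × (Bool × Bool) → ℝ)
    (hpdef : ∀ x1 x2 u y,
      p (x1, x2, u, y) = (1 / 16 : ℝ) * pUc x1 u * pYc u x2 y)
    (g : U → Bool × Bool → β) (b : β) :
    marg p (fun ω => g ω.2.2.1 ω.1) b
      = ∑ x, ∑ u, if g u x = b then pUc x u / 4 else 0 := by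
  unfold marg
  rw [Fintype.sum_prod_type]
  refine Finset.sum_congr rfl fun x _ => ?_
  have h : ∀ (x2 : Bool × Bool) (u : U),
      (∑ y, if g u x = b then p (x, x2, u, y) else 0)
        = if g u x = b then pUc x u / 16 else 0 := by
    intro x2 u
    split_ifs
    · simp only [hpdef]
      rw [← Finset.mul_sum, (hpY u x2).2]
      ring
    · simp
  rw [Fintype.sum_prod_type]
  simp only [Fintype.sum_prod_type (α₁ := U), h]
  rw [Finset.sum_const, Finset.smul_sum]
  refine Finset.sum_congr rfl fun u _ => ?_
  split_ifs
  · simp only [card_univ, Fintype.card_prod, Fintype.card_bool, nsmul_eq_mul]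
    push_cast
    ring
  · simp

/-- **Single-letter converse for the example with encoder shared randomness.**  For any
joint pmf `p(x₁,x₂,u,y) = p(x₁) p(x₂) p(u|x₁) p(y|u,x₂)` with `(X₁,X₂)`-marginal four
i.i.d. uniform bits and `(X₁,X₂,Y)`-marginal equal to the Example distribution `qEx`, we
have `I(U;X₁) ≥ 1`. -/
theorem example_single_letter_converse_encSR
    {U : Type} [Fintype U] [DecidableEq U]
    (pUc : Bool × Bool → U → ℝ) (pYc : U → Bool × Bool → Bool × Bool → ℝ)
    (hpU : ∀ x1, IsPMF (pUc x1)) (hpY : ∀ u x2, IsPMF (pYc u x2))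
    (p : (Bool × Bool) × (Bool × Bool) × U × (Bool × Bool) → ℝ)
    (hpdef : ∀ x1 x2 u y,
      p (x1, x2, u, y) = (1 / 16 : ℝ) * pUc x1 u * pYc u x2 y)
    (hmarg : ∀ x1 x2 y,
      (∑ u : U, (1 / 16 : ℝ) * pUc x1 u * pYc u x2 y) = qEx (x1, x2, y)) :
    1 ≤ mi p (fun ω => ω.2.2.1) (fun ω => ω.1) := by
  have hM := fun {β : Type} [DecidableEq β] (g : U → Bool × Bool → β) (b : β) =>
    marg_message_source pUc pYc hpY p hpdef g b
  have hMU : ∀ u, marg p (fun ω => ω.2.2.1) u = ∑ x, pUc x u / 4 := by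
    intro u
    rw [hM (fun u _ => u) u]
    simp
  have hMX : ∀ x, marg p (fun ω => ω.1) x = 1 / 4 := by
    intro x
    rw [hM (fun _ x => x) x, Finset.sum_comm]
    simp only [Finset.sum_ite_eq', mem_univ, if_true]
    rw [← Finset.sum_div, (hpU x).2]
  have hMUX : ∀ b : U × (Bool × Bool),
      marg p (fun ω => (ω.2.2.1, ω.1)) b = pUc b.2 b.1 / 4 := by
    rintro ⟨u, x⟩
    rw [hM (fun u x => (u, x)) (u, x), Finset.sum_eq_single x, Finset.sum_eq_single u]
    · simp
    · intro v _ hv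
      simp [hv]
    · simp
    · intro z _ hz
      simp [hz]
    · simp
  have hlog : Real.logb 2 (1 / 4) = -2 := by
    rw [show (1 / 4 : ℝ) = 2 ^ (-2 : ℝ) by norm_num [Real.rpow_neg]]
    exact Real.logb_rpow (by norm_num) (by norm_num)
  have hmass : ∑ u, ∑ x, pUc x u / 4 = 1 := by
    rw [Finset.sum_comm]
    simp only [← Finset.sum_div, (hpU _).2]
    simp
  -- The contribution of a single message `u` to `H(X₁ | U) ≤ 1`.
  have hstep : ∀ u, (∑ x, pUc x u / 4) * Real.logb 2 (∑ x, pUc x u / 4) - ∑ x, pUc x u / 4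
      ≤ ∑ x, pUc x u / 4 * Real.logb 2 (pUc x u / 4) := by
    intro u
    have hn : ∀ x, 0 ≤ pUc x u / 4 := fun x => div_nonneg ((hpU x).1 u) (by norm_num)
    simp only [Fintype.sum_prod_type, Fintype.sum_bool]
    rcases support_of_message pUc pYc hpU hpY hmarg u with ⟨c, hc⟩ | ⟨d, hd⟩
    · cases c
      · simpa [hc] using two_point_entropy (hn (true, true)) (hn (true, false))
      · simpa [hc] using two_point_entropy (hn (false, true)) (hn (false, false))
    · cases d
      · simpa [hd] using two_point_entropy (hn (true, true)) (hn (false, true))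
      · simpa [hd] using two_point_entropy (hn (true, false)) (hn (false, false))
  have hsum := Finset.sum_le_sum fun u (_ : u ∈ univ) => hstep u
  rw [Finset.sum_sub_distrib, hmass] at hsum
  have hX : ent p (fun ω => ω.1) = 2 := by
    simp only [ent, entPMF, hMX, hlog]
    simp
  have hU : ent p (fun ω => ω.2.2.1)
      = -∑ u, (∑ x, pUc x u / 4) * Real.logb 2 (∑ x, pUc x u / 4) := by
    simp only [ent, entPMF, hMU]
  have hUX : ent p (fun ω => (ω.2.2.1, ω.1))
      = -∑ u, ∑ x, pUc x u / 4 * Real.logb 2 (pUc x u / 4) := by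
    simp only [ent, entPMF, hMUX]
    rw [Fintype.sum_prod_type]
  rw [mi, hX, hU, hUX]
  linarith
end

section
/- Optimal single-letter communication rate region for the example with shared randomness between all three pairs. The set of pairs (R₁,R₂) of nonnegative reals for which there exist finite sets 𝒯,𝒰₀,𝒰₁,𝒰₂ and a pmf p(x₁,x₂,t,u₀,u₁,u₂,y) = p(x₁) p(x₂) p(t) p(u₀|t) p(u₁|x₁,u₀,t) p(u₂|x₂,u₀,t) p(y|u₁,u₂,t), whose (X₁,X₂)-marginal is that of four i.i.d. uniform bits and which satisfies ∑_{u₀,u₁,u₂} p(x₁,x₂,u₀,u₁,u₂,y|t) = q(x₁,x₂,y) for every t, with R₁ ≥ I(U₀,U₁;X₁|T), R₂ ≥ I(U₀,U₂;X₂|T), and R₁+R₂ ≥ I(U₀,U₁,U₂;X₁,X₂|T), is exactly the set { (R₁,R₂) : R₁ ≥ 1, R₂ ≥ 1 }. -/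
/-! The converse rests on a support argument. Fix `t` and `(u₀, u₁)`, and test against the second
input `x₂ = (0, 1)`: any `u₂`, `y` it can lead to must satisfy `y = (x₁ⱼ, x₂ⱼ)` for some `j`, for
*every* `x₁` compatible with `(u₀, u₁)`. Since `x₂₁ ≠ x₂₂`, the pair `y` determines `j` and one bit
of `x₁`, so `x₁` and its bitwise complement cannot both be compatible with `(u₀, u₁)`
(`compat_not_right`, `compl_mul_eq_zero_left`). Hence the conditional law of `X₁` has at most two
atoms, `H(X₁ | U₀, U₁, T) ≤ 1`, and `I(U₀, U₁; X₁ | T) ≥ 2 - 1` (`one_le_cmi`). The bound on `R₂` is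
symmetric.

For achievability, let `T` be trivial, `U₀ = J` the uniform index, `Uᵢ = XᵢJ` and `Y = (U₁, U₂)`;
the three informations are then `1`, `1` and `2`. -/

open Finset

/-! ### Marginals of a pmf -/

lemma marg_nonneg {Ω β : Type*} [Fintype Ω] [DecidableEq β] {p : Ω → ℝ} (hp : ∀ ω, 0 ≤ p ω)
    (f : Ω → β) (b : β) : 0 ≤ marg p f b :=
  Finset.sum_nonneg fun ω _ => by split_ifs <;> simp [hp]

lemma sum_marg {Ω β : Type*} [Fintype Ω] [Fintype β] [DecidableEq β] (p : Ω → ℝ) (f : Ω → β) :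
    ∑ b, marg p f b = ∑ ω, p ω := by
  unfold marg
  rw [Finset.sum_comm]
  simp

lemma marg_pair_eq_sum {Ω β γ δ : Type*} [Fintype Ω] [Fintype γ]
    [DecidableEq β] [DecidableEq γ] [DecidableEq δ]
    (p : Ω → ℝ) (f : Ω → β) (g : Ω → γ) (h : Ω → δ) (b : β) (d : δ) :
    marg p (fun ω => (f ω, h ω)) (b, d)
      = ∑ x, marg p (fun ω => (f ω, g ω, h ω)) (b, x, d) := by
  unfold marg
  rw [Finset.sum_comm]
  refine Finset.sum_congr rfl fun ω _ => ?_
  simp only [Prod.mk.injEq]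
  by_cases h1 : f ω = b <;> by_cases h2 : h ω = d <;> simp [h1, h2]

lemma marg_eq_sum {Ω γ δ : Type*} [Fintype Ω] [Fintype γ] [DecidableEq γ] [DecidableEq δ]
    (p : Ω → ℝ) (g : Ω → γ) (h : Ω → δ) (d : δ) :
    marg p h d = ∑ x, marg p (fun ω => (g ω, h ω)) (x, d) := by
  unfold marg
  rw [Finset.sum_comm]
  refine Finset.sum_congr rfl fun ω _ => ?_
  simp only [Prod.mk.injEq]
  by_cases h2 : h ω = d <;> simp [h2]

/-! ### Entropy bound for laws with at most two atoms -/

/-- A mass `a + c` split into two atoms carries at most one bit: concavity of `x ↦ -x log x` at the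
midpoint. -/
lemma two_atom_bound {a c : ℝ} (ha : 0 ≤ a) (hc : 0 ≤ c) :
    (a + c) * Real.logb 2 (a + c) - a * Real.logb 2 a - c * Real.logb 2 c ≤ a + c := by
  rcases (add_nonneg ha hc).eq_or_lt with h0 | h0
  · have h1 : a = 0 := by linarith
    have h2 : c = 0 := by linarith
    simp [h1, h2]
  have hl : 0 < Real.log 2 := Real.log_pos (by norm_num)
  have key := Real.concaveOn_negMulLog.2 (Set.mem_Ici.2 ha) (Set.mem_Ici.2 hc)
    (by norm_num : (0 : ℝ) ≤ 1 / 2) (by norm_num : (0 : ℝ) ≤ 1 / 2) (by norm_num)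
  simp only [Real.negMulLog, smul_eq_mul] at key
  rw [show 1 / 2 * a + 1 / 2 * c = (a + c) / 2 by ring,
    Real.log_div h0.ne' (by norm_num)] at key
  simp only [Real.logb]
  rw [show (a + c) * (Real.log (a + c) / Real.log 2) - a * (Real.log a / Real.log 2)
    - c * (Real.log c / Real.log 2)
    = ((a + c) * Real.log (a + c) - a * Real.log a - c * Real.log c) / Real.log 2 by ring,
    div_le_iff₀ hl]
  linarith

/-- A mass function on two-bit strings that never charges both a string and its complement has at
most two atoms, hence at most one bit of entropy. -/
lemma compl_free_bound (r : Bool × Bool → ℝ) (hr : ∀ x, 0 ≤ r x)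
    (hz : ∀ x, r x * r (!x.1, !x.2) = 0) :
    (∑ x, r x) * Real.logb 2 (∑ x, r x) - ∑ x, r x * Real.logb 2 (r x) ≤ ∑ x, r x := by
  have merge : ∀ x, (r x + r (!x.1, !x.2)) * Real.logb 2 (r x + r (!x.1, !x.2))
      = r x * Real.logb 2 (r x) + r (!x.1, !x.2) * Real.logb 2 (r (!x.1, !x.2)) := by
    intro x
    rcases mul_eq_zero.1 (hz x) with h | h <;> simp [h]
  have h1 := merge (true, true)
  have h2 := merge (true, false)
  have h3 := two_atom_bound (add_nonneg (hr (true, true)) (hr (false, false)))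
    (add_nonneg (hr (true, false)) (hr (false, true)))
  simp only [Bool.not_true, Bool.not_false] at h1 h2
  simp only [Fintype.sum_prod_type, Fintype.sum_bool]
  rw [h1, h2] at h3
  rw [show r (true, true) + r (true, false) + (r (false, true) + r (false, false))
    = r (true, true) + r (false, false) + (r (true, false) + r (false, true)) by ring]
  linarith

/-- If `g` is a uniform two-bit string independent of `h`, and no value of `(f, h)` is compatible
with both a string and its complement, then `I(f ; g | h) ≥ 1`. -/
lemma one_le_cmi {Ω β δ : Type*} [Fintype Ω] [Fintype β] [Fintype δ]
    [DecidableEq β] [DecidableEq δ] (p : Ω → ℝ) (hp : ∀ ω, 0 ≤ p ω)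
    (f : Ω → β) (g : Ω → Bool × Bool) (h : Ω → δ) (pT : δ → ℝ) (hT : IsPMF pT)
    (hg : ∀ x d, marg p (fun ω => (g ω, h ω)) (x, d) = 1 / 4 * pT d)
    (hz : ∀ b x d, marg p (fun ω => (f ω, g ω, h ω)) (b, x, d)
      * marg p (fun ω => (f ω, g ω, h ω)) (b, (!x.1, !x.2), d) = 0) :
    1 ≤ cmi p f g h := by
  have hh : ∀ d, marg p h d = pT d := by
    intro d
    rw [marg_eq_sum p g h d]
    simp [hg]
  have htot : ∑ ω, p ω = 1 := by
    rw [← sum_marg p h]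
    simp [hh, hT.2]
  have hA : ent p (fun ω => (g ω, h ω)) - ent p h = 2 := by
    have e : ∀ d, 1 / 4 * pT d * Real.logb 2 (1 / 4 * pT d)
        = 1 / 4 * (pT d * Real.logb 2 (pT d)) - 1 / 2 * pT d := by
      intro d
      rcases eq_or_ne (pT d) 0 with h0 | h0
      · simp [h0]
      · rw [Real.logb_mul (by norm_num) h0,
          show (1 / 4 : ℝ) = (2 : ℝ) ^ (-2 : ℝ) by
            rw [Real.rpow_neg (by norm_num)]; norm_num,
          Real.logb_rpow (by norm_num) (by norm_num), Real.rpow_neg (by norm_num)]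
        norm_num
        ring
    unfold ent entPMF
    rw [Fintype.sum_prod_type]
    simp only [hg, hh, e, Finset.sum_sub_distrib, ← Finset.mul_sum, hT.2]
    simp
    ring
  have hB : ent p (fun ω => (f ω, g ω, h ω)) - ent p (fun ω => (f ω, h ω)) ≤ 1 := by
    have hsum : ∑ b, ∑ d, marg p (fun ω => (f ω, h ω)) (b, d) = 1 := by
      rw [← htot, ← sum_marg p (fun ω => (f ω, h ω)), Fintype.sum_prod_type]
    rw [← hsum]
    unfold ent entPMF
    simp only [Fintype.sum_prod_type (α₁ := β)]
    rw [neg_sub_neg, ← Finset.sum_sub_distrib]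
    refine Finset.sum_le_sum fun b _ => ?_
    rw [Fintype.sum_prod_type (α₁ := Bool × Bool), Finset.sum_comm, ← Finset.sum_sub_distrib]
    refine Finset.sum_le_sum fun d _ => ?_
    rw [marg_pair_eq_sum p f g h b d]
    exact compl_free_bound _ (fun x => marg_nonneg hp _ _) fun x => hz b x d
  unfold cmi
  linarith

/-! ### Support constraints -/

lemma compat_of_qEx_ne_zero {x1 x2 y : Bool × Bool} (h : qEx (x1, x2, y) ≠ 0) :
    y = (x1.1, x2.1) ∨ y = (x1.2, x2.2) := by
  by_contra hc
  push Not at hc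
  apply h
  simp [qEx, bsel, hc.1, hc.2]

/-- When `x₂ = (0, 1)`, no output is compatible with both `x` and its complement. -/
lemma compat_not_right : ∀ x y : Bool × Bool,
    (y = (x.1, false) ∨ y = (x.2, true)) → (y = (!x.1, false) ∨ y = (!x.2, true)) → False := by
  decide

lemma compat_not_left : ∀ x y : Bool × Bool,
    (y = (false, x.1) ∨ y = (true, x.2)) → (y = (false, !x.1) ∨ y = (true, !x.2)) → False := by
  decide

lemma IsPMF.exists_ne_zero {α : Type*} [Fintype α] {p : α → ℝ} (h : IsPMF p) : ∃ a, p a ≠ 0 := by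
  by_contra hc
  push Not at hc
  simpa [hc] using h.2

section Converse

variable {U0 U1 U2 : Type} [Fintype U0] [Fintype U1] [Fintype U2]
  {a0 : U0 → ℝ} {a1 : Bool × Bool → U0 → U1 → ℝ} {a2 : Bool × Bool → U0 → U2 → ℝ}
  {aY : U1 → U2 → Bool × Bool → ℝ}

lemma compat_of_support (h0 : IsPMF a0) (h1 : ∀ x u, IsPMF (a1 x u)) (h2 : ∀ x u, IsPMF (a2 x u))
    (hY : ∀ u v, IsPMF (aY u v))
    (hq : ∀ x1 x2 y, (∑ u0, ∑ u1, ∑ u2,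
      (1 / 16 : ℝ) * a0 u0 * a1 x1 u0 u1 * a2 x2 u0 u2 * aY u1 u2 y) = qEx (x1, x2, y))
    {x1 x2 y : Bool × Bool} {u0 : U0} {u1 : U1} {u2 : U2} (n0 : a0 u0 ≠ 0) (n1 : a1 x1 u0 u1 ≠ 0)
    (n2 : a2 x2 u0 u2 ≠ 0) (nY : aY u1 u2 y ≠ 0) :
    y = (x1.1, x2.1) ∨ y = (x1.2, x2.2) := by
  apply compat_of_qEx_ne_zero
  rw [← hq]
  have nn : ∀ v0 v1 v2, 0 ≤ (1 / 16 : ℝ) * a0 v0 * a1 x1 v0 v1 * a2 x2 v0 v2 * aY v1 v2 y := by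
    intro v0 v1 v2
    have := h0.1 v0
    have := (h1 x1 v0).1 v1
    have := (h2 x2 v0).1 v2
    have := (hY v1 v2).1 y
    positivity
  intro hs
  rw [Finset.sum_eq_zero_iff_of_nonneg fun v0 _ => Finset.sum_nonneg fun v1 _ =>
    Finset.sum_nonneg fun v2 _ => nn v0 v1 v2] at hs
  have hs := hs u0 (Finset.mem_univ _)
  rw [Finset.sum_eq_zero_iff_of_nonneg fun v1 _ =>
    Finset.sum_nonneg fun v2 _ => nn u0 v1 v2] at hs
  have hs := hs u1 (Finset.mem_univ _)
  rw [Finset.sum_eq_zero_iff_of_nonneg fun v2 _ => nn u0 u1 v2] at hs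
  have hs := hs u2 (Finset.mem_univ _)
  simp [n0, n1, n2, nY] at hs

/-- `U₀ = u₀`, `U₁ = u₁` cannot be reached both from `x` and from its complement. -/
lemma compl_mul_eq_zero_left (h0 : IsPMF a0) (h1 : ∀ x u, IsPMF (a1 x u))
    (h2 : ∀ x u, IsPMF (a2 x u)) (hY : ∀ u v, IsPMF (aY u v))
    (hq : ∀ x1 x2 y, (∑ u0, ∑ u1, ∑ u2,
      (1 / 16 : ℝ) * a0 u0 * a1 x1 u0 u1 * a2 x2 u0 u2 * aY u1 u2 y) = qEx (x1, x2, y))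
    (x : Bool × Bool) (u0 : U0) (u1 : U1) :
    a0 u0 * a1 x u0 u1 * (a0 u0 * a1 (!x.1, !x.2) u0 u1) = 0 := by
  by_contra hc
  simp only [mul_eq_zero, not_or] at hc
  obtain ⟨u2, n2⟩ := (h2 (false, true) u0).exists_ne_zero
  obtain ⟨y, nY⟩ := (hY u1 u2).exists_ne_zero
  exact compat_not_right x y (compat_of_support h0 h1 h2 hY hq hc.1.1 hc.1.2 n2 nY)
    (compat_of_support h0 h1 h2 hY hq hc.1.1 hc.2.2 n2 nY)

lemma compl_mul_eq_zero_right (h0 : IsPMF a0) (h1 : ∀ x u, IsPMF (a1 x u))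
    (h2 : ∀ x u, IsPMF (a2 x u)) (hY : ∀ u v, IsPMF (aY u v))
    (hq : ∀ x1 x2 y, (∑ u0, ∑ u1, ∑ u2,
      (1 / 16 : ℝ) * a0 u0 * a1 x1 u0 u1 * a2 x2 u0 u2 * aY u1 u2 y) = qEx (x1, x2, y))
    (x : Bool × Bool) (u0 : U0) (u2 : U2) :
    a0 u0 * a2 x u0 u2 * (a0 u0 * a2 (!x.1, !x.2) u0 u2) = 0 := by
  by_contra hc
  simp only [mul_eq_zero, not_or] at hc
  obtain ⟨u1, n1⟩ := (h1 (false, true) u0).exists_ne_zero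
  obtain ⟨y, nY⟩ := (hY u1 u2).exists_ne_zero
  exact compat_not_left x y (compat_of_support h0 h1 h2 hY hq hc.1.1 n1 hc.1.2 nY)
    (compat_of_support h0 h1 h2 hY hq hc.1.1 n1 hc.2.2 nY)

end Converse

/-! ### Marginals of the factorized pmf -/

section Marginals

variable {T U0 U1 U2 : Type} [Fintype T] [Fintype U0] [Fintype U1] [Fintype U2]
  [DecidableEq T] [DecidableEq U0] [DecidableEq U1] [DecidableEq U2]
  {pT : T → ℝ} {pU0c : T → U0 → ℝ} {pU1c : Bool × Bool → U0 → T → U1 → ℝ}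
  {pU2c : Bool × Bool → U0 → T → U2 → ℝ} {pYc : U1 → U2 → T → Bool × Bool → ℝ}
  {p : (Bool × Bool) × (Bool × Bool) × T × U0 × U1 × U2 × (Bool × Bool) → ℝ}

lemma marg_all (hY : ∀ u1 u2 t, IsPMF (pYc u1 u2 t))
    (hp : ∀ x1 x2 t u0 u1 u2 y, p (x1, x2, t, u0, u1, u2, y) =
      (1 / 16 : ℝ) * pT t * pU0c t u0 * pU1c x1 u0 t u1 * pU2c x2 u0 t u2 * pYc u1 u2 t y)
    (u0 : U0) (u1 : U1) (u2 : U2) (x1 x2 : Bool × Bool) (t : T) :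
    marg p (fun ω => ((ω.2.2.2.1, ω.2.2.2.2.1, ω.2.2.2.2.2.1), (ω.1, ω.2.1), ω.2.2.1))
      ((u0, u1, u2), (x1, x2), t)
      = 1 / 16 * pT t * pU0c t u0 * pU1c x1 u0 t u1 * pU2c x2 u0 t u2 := by
  unfold marg
  simp only [Fintype.sum_prod_type (α₁ := Bool × Bool), Fintype.sum_prod_type (α₁ := T),
    Fintype.sum_prod_type (α₁ := U0), Fintype.sum_prod_type (α₁ := U1),
    Fintype.sum_prod_type (α₁ := U2), Prod.mk.injEq, ite_and, hp]
  rw [Finset.sum_eq_single x1 (by intro b _ hb; simp [hb]) (by simp),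
    Finset.sum_eq_single x2 (by intro b _ hb; simp [hb]) (by simp),
    Finset.sum_eq_single t (by intro b _ hb; simp [hb]) (by simp),
    Finset.sum_eq_single u0 (by intro b _ hb; simp [hb]) (by simp),
    Finset.sum_eq_single u1 (by intro b _ hb; simp [hb]) (by simp),
    Finset.sum_eq_single u2 (by intro b _ hb; simp [hb]) (by simp)]
  simp only [if_true, ← Finset.mul_sum, (hY u1 u2 t).2, mul_one]

lemma marg_left (h2 : ∀ x2 u0 t, IsPMF (pU2c x2 u0 t)) (hY : ∀ u1 u2 t, IsPMF (pYc u1 u2 t))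
    (hp : ∀ x1 x2 t u0 u1 u2 y, p (x1, x2, t, u0, u1, u2, y) =
      (1 / 16 : ℝ) * pT t * pU0c t u0 * pU1c x1 u0 t u1 * pU2c x2 u0 t u2 * pYc u1 u2 t y)
    (u0 : U0) (u1 : U1) (x1 : Bool × Bool) (t : T) :
    marg p (fun ω => ((ω.2.2.2.1, ω.2.2.2.2.1), ω.1, ω.2.2.1)) ((u0, u1), x1, t)
      = 1 / 4 * pT t * pU0c t u0 * pU1c x1 u0 t u1 := by
  unfold marg
  simp only [Fintype.sum_prod_type (α₁ := Bool × Bool), Fintype.sum_prod_type (α₁ := T),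
    Fintype.sum_prod_type (α₁ := U0), Fintype.sum_prod_type (α₁ := U1),
    Fintype.sum_prod_type (α₁ := U2), Prod.mk.injEq, ite_and, hp]
  rw [Finset.sum_eq_single x1 (by intro b _ hb; simp [hb]) (by simp)]
  have e : ∀ x2 : Bool × Bool, (∑ t', ∑ u0', ∑ u1', ∑ u2, ∑ y,
      if u0' = u0 then if u1' = u1 then if x1 = x1 then if t' = t then
        (1 / 16 : ℝ) * pT t' * pU0c t' u0' * pU1c x1 u0' t' u1' * pU2c x2 u0' t' u2 *
          pYc u1' u2 t' y else 0 else 0 else 0 else 0)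
      = 1 / 16 * pT t * pU0c t u0 * pU1c x1 u0 t u1 := by
    intro x2
    rw [Finset.sum_eq_single t (by intro b _ hb; simp [hb]) (by simp),
      Finset.sum_eq_single u0 (by intro b _ hb; simp [hb]) (by simp),
      Finset.sum_eq_single u1 (by intro b _ hb; simp [hb]) (by simp)]
    simp only [if_true, ← Finset.mul_sum, (hY u1 _ t).2, mul_one, (h2 x2 u0 t).2]
  refine (Finset.sum_congr rfl fun x _ => e x).trans ?_
  simp
  ring

lemma marg_right (h1 : ∀ x1 u0 t, IsPMF (pU1c x1 u0 t)) (hY : ∀ u1 u2 t, IsPMF (pYc u1 u2 t))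
    (hp : ∀ x1 x2 t u0 u1 u2 y, p (x1, x2, t, u0, u1, u2, y) =
      (1 / 16 : ℝ) * pT t * pU0c t u0 * pU1c x1 u0 t u1 * pU2c x2 u0 t u2 * pYc u1 u2 t y)
    (u0 : U0) (u2 : U2) (x2 : Bool × Bool) (t : T) :
    marg p (fun ω => ((ω.2.2.2.1, ω.2.2.2.2.2.1), ω.2.1, ω.2.2.1)) ((u0, u2), x2, t)
      = 1 / 4 * pT t * pU0c t u0 * pU2c x2 u0 t u2 := by
  unfold marg
  simp only [Fintype.sum_prod_type (α₁ := Bool × Bool), Fintype.sum_prod_type (α₁ := T),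
    Fintype.sum_prod_type (α₁ := U0), Fintype.sum_prod_type (α₁ := U1),
    Fintype.sum_prod_type (α₁ := U2), Prod.mk.injEq, ite_and, hp]
  have e : ∀ x1 : Bool × Bool, (∑ x2', ∑ t', ∑ u0', ∑ u1, ∑ u2', ∑ y,
      if u0' = u0 then if u2' = u2 then if x2' = x2 then if t' = t then
        (1 / 16 : ℝ) * pT t' * pU0c t' u0' * pU1c x1 u0' t' u1 * pU2c x2' u0' t' u2' *
          pYc u1 u2' t' y else 0 else 0 else 0 else 0)
      = 1 / 16 * pT t * pU0c t u0 * pU2c x2 u0 t u2 := by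
    intro x1
    rw [Finset.sum_eq_single x2 (by intro b _ hb; simp [hb]) (by simp),
      Finset.sum_eq_single t (by intro b _ hb; simp [hb]) (by simp),
      Finset.sum_eq_single u0 (by intro b _ hb; simp [hb]) (by simp)]
    have e2 : ∀ u1, (∑ u2', ∑ y, if u0 = u0 then if u2' = u2 then if x2 = x2 then if t = t then
        (1 / 16 : ℝ) * pT t * pU0c t u0 * pU1c x1 u0 t u1 * pU2c x2 u0 t u2' *
          pYc u1 u2' t y else 0 else 0 else 0 else 0)
        = 1 / 16 * pT t * pU0c t u0 * pU2c x2 u0 t u2 * pU1c x1 u0 t u1 := by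
      intro u1
      rw [Finset.sum_eq_single u2 (by intro b _ hb; simp [hb]) (by simp)]
      simp only [if_true, ← Finset.mul_sum, (hY u1 _ t).2, mul_one]
      ring
    refine (Finset.sum_congr rfl fun u1 _ => e2 u1).trans ?_
    simp only [← Finset.mul_sum, (h1 x1 u0 t).2, mul_one]
  refine (Finset.sum_congr rfl fun x _ => e x).trans ?_
  simp
  ring

end Marginals

/-! ### The optimal scheme and the rate region -/

/-- A random variable uniform on a set of `2 ^ k` values has entropy `k` bits. -/
lemma ent_of_flat {Ω β : Type*} [Fintype Ω] [Fintype β] [DecidableEq β] {p : Ω → ℝ} {f : Ω → β}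
    (P : β → Prop) [DecidablePred P] (k : ℕ)
    (hm : ∀ b, marg p f b = if P b then 1 / 2 ^ k else 0)
    (hc : (Finset.univ.filter P).card = 2 ^ k) : ent p f = k := by
  have e : ∀ b, marg p f b * Real.logb 2 (marg p f b)
      = if P b then -(k : ℝ) / 2 ^ k else 0 := by
    intro b
    rw [hm]
    split_ifs
    · rw [one_div, Real.logb_inv, Real.logb_pow, Real.logb_self_eq_one (by norm_num)]
      ring
    · simp
  unfold ent entPMF
  simp only [e]
  rw [← Finset.sum_filter, Finset.sum_const, hc]
  simp
  field_simp

/-- The optimal joint pmf of `(X₁, X₂, T, U₀, U₁, U₂, Y)`: `T` is trivial, `U₀ = J` is a uniform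
index, `Uᵢ = XᵢJ` and `Y = (U₁, U₂)`. The factor `1` is the law of `T`. -/
noncomputable def pOpt :
    (Bool × Bool) × (Bool × Bool) × Unit × Fin 2 × Bool × Bool × (Bool × Bool) → ℝ :=
  fun ω => (1 / 16 : ℝ) * 1 * (1 / 2) * (if ω.2.2.2.2.1 = bsel ω.1 ω.2.2.2.1 then 1 else 0) *
    (if ω.2.2.2.2.2.1 = bsel ω.2.1 ω.2.2.2.1 then 1 else 0) *
    (if ω.2.2.2.2.2.2 = (ω.2.2.2.2.1, ω.2.2.2.2.2.1) then 1 else 0)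

/-- **Optimal single-letter communication rate region for the example with shared
randomness between all three pairs.**  The set of nonnegative rate pairs `(R₁, R₂)`
admitting finite auxiliary alphabets `T, U₀, U₁, U₂` and a pmf
`p(x₁,x₂,t,u₀,u₁,u₂,y) = p(x₁) p(x₂) p(t) p(u₀|t) p(u₁|x₁,u₀,t) p(u₂|x₂,u₀,t) p(y|u₁,u₂,t)`
(with `(X₁,X₂)`-marginal four i.i.d. uniform bits) satisfying
`∑_{u₀,u₁,u₂} p(x₁,x₂,u₀,u₁,u₂,y|t) = q(x₁,x₂,y)` for every `t`, with
`R₁ ≥ I(U₀,U₁;X₁|T)`, `R₂ ≥ I(U₀,U₂;X₂|T)` and `R₁+R₂ ≥ I(U₀,U₁,U₂;X₁,X₂|T)`, is exactly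
`{(R₁,R₂) : R₁ ≥ 1, R₂ ≥ 1}`. -/
theorem example_rate_region_all_pairs_SR :
    {r : ℝ × ℝ | 0 ≤ r.1 ∧ 0 ≤ r.2 ∧
      ∃ (T U0 U1 U2 : Type) (_ : Fintype T) (_ : Fintype U0) (_ : Fintype U1)
        (_ : Fintype U2) (_ : DecidableEq T) (_ : DecidableEq U0) (_ : DecidableEq U1)
        (_ : DecidableEq U2)
        (pT : T → ℝ) (pU0c : T → U0 → ℝ)
        (pU1c : Bool × Bool → U0 → T → U1 → ℝ)
        (pU2c : Bool × Bool → U0 → T → U2 → ℝ)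
        (pYc : U1 → U2 → T → Bool × Bool → ℝ)
        (p : (Bool × Bool) × (Bool × Bool) × T × U0 × U1 × U2 × (Bool × Bool) → ℝ),
        IsPMF pT ∧
        (∀ t, IsPMF (pU0c t)) ∧
        (∀ x1 u0 t, IsPMF (pU1c x1 u0 t)) ∧
        (∀ x2 u0 t, IsPMF (pU2c x2 u0 t)) ∧
        (∀ u1 u2 t, IsPMF (pYc u1 u2 t)) ∧
        (∀ x1 x2 t u0 u1 u2 y,
          p (x1, x2, t, u0, u1, u2, y) =
            (1 / 16 : ℝ) * pT t * pU0c t u0 * pU1c x1 u0 t u1 * pU2c x2 u0 t u2 *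
              pYc u1 u2 t y) ∧
        (∀ t x1 x2 y,
          (∑ u0 : U0, ∑ u1 : U1, ∑ u2 : U2,
            (1 / 16 : ℝ) * pU0c t u0 * pU1c x1 u0 t u1 * pU2c x2 u0 t u2 *
              pYc u1 u2 t y) = qEx (x1, x2, y)) ∧
        cmi p (fun ω => (ω.2.2.2.1, ω.2.2.2.2.1)) (fun ω => ω.1)
          (fun ω => ω.2.2.1) ≤ r.1 ∧
        cmi p (fun ω => (ω.2.2.2.1, ω.2.2.2.2.2.1)) (fun ω => ω.2.1)
          (fun ω => ω.2.2.1) ≤ r.2 ∧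
        cmi p (fun ω => (ω.2.2.2.1, ω.2.2.2.2.1, ω.2.2.2.2.2.1))
          (fun ω => (ω.1, ω.2.1)) (fun ω => ω.2.2.1) ≤ r.1 + r.2}
    = {r : ℝ × ℝ | 1 ≤ r.1 ∧ 1 ≤ r.2} := by
  ext ⟨R1, R2⟩
  simp only [Set.mem_ofPred_eq]
  constructor
  · rintro ⟨-, -, T, U0, U1, U2, _, _, _, _, _, _, _, _, pT, pU0c, pU1c, pU2c, pYc, p,
      hT, h0, h1, h2, hY, hp, hq, hR1, hR2, -⟩
    have hnn : ∀ ω, 0 ≤ p ω := by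
      rintro ⟨x1, x2, t, u0, u1, u2, y⟩
      rw [hp]
      have := hT.1 t
      have := (h0 t).1 u0
      have := (h1 x1 u0 t).1 u1
      have := (h2 x2 u0 t).1 u2
      have := (hY u1 u2 t).1 y
      positivity
    constructor
    · refine le_trans (one_le_cmi p hnn _ _ _ pT hT ?_ ?_) hR1
      · intro x t
        rw [marg_eq_sum p (fun ω => (ω.2.2.2.1, ω.2.2.2.2.1)) (fun ω => (ω.1, ω.2.2.1)),
          Fintype.sum_prod_type]
        simp only [marg_left h2 hY hp, ← Finset.mul_sum, (h1 _ _ _).2, (h0 t).2, mul_one]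
      · rintro ⟨u0, u1⟩ x t
        rw [marg_left h2 hY hp, marg_left h2 hY hp]
        linear_combination (1 / 4 * pT t) ^ 2 *
          compl_mul_eq_zero_left (h0 t) (fun x u => h1 x u t) (fun x u => h2 x u t)
            (fun u v => hY u v t) (hq t) x u0 u1
    · refine le_trans (one_le_cmi p hnn _ _ _ pT hT ?_ ?_) hR2
      · intro x t
        rw [marg_eq_sum p (fun ω => (ω.2.2.2.1, ω.2.2.2.2.2.1)) (fun ω => (ω.2.1, ω.2.2.1)),
          Fintype.sum_prod_type]
        simp only [marg_right h1 hY hp, ← Finset.mul_sum, (h2 _ _ _).2, (h0 t).2, mul_one]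
      · rintro ⟨u0, u2⟩ x t
        rw [marg_right h1 hY hp, marg_right h1 hY hp]
        linear_combination (1 / 4 * pT t) ^ 2 *
          compl_mul_eq_zero_right (h0 t) (fun x u => h1 x u t) (fun x u => h2 x u t)
            (fun u v => hY u v t) (hq t) x u0 u2
  · rintro ⟨hR1, hR2⟩
    refine ⟨by linarith, by linarith, Unit, Fin 2, Bool, Bool, inferInstance, inferInstance,
      inferInstance, inferInstance, inferInstance, inferInstance, inferInstance, inferInstance,
      fun _ => 1, fun _ _ => 1 / 2, fun x j _ u => if u = bsel x j then 1 else 0,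
      fun x j _ u => if u = bsel x j then 1 else 0,
      fun u v _ y => if y = (u, v) then 1 else 0,
      pOpt, ?_⟩
    have i1 : IsPMF (fun _ : Unit => (1 : ℝ)) := ⟨fun _ => by norm_num, by simp⟩
    have i0 : ∀ _ : Unit, IsPMF (fun _ : Fin 2 => (1 / 2 : ℝ)) :=
      fun _ => ⟨fun _ => by norm_num, by simp⟩
    have iU : ∀ (x : Bool × Bool) (j : Fin 2) (_ : Unit),
        IsPMF (fun u : Bool => if u = bsel x j then (1 : ℝ) else 0) :=
      fun x j _ => ⟨fun _ => by dsimp only; split_ifs <;> norm_num, by simp⟩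
    have iY : ∀ (u v : Bool) (_ : Unit),
        IsPMF (fun y : Bool × Bool => if y = (u, v) then (1 : ℝ) else 0) :=
      fun u v _ => ⟨fun _ => by dsimp only; split_ifs <;> norm_num, by simp⟩
    refine ⟨i1, i0, iU, iU, iY, fun _ _ _ _ _ _ _ => rfl, ?_, ?_, ?_, ?_⟩
    · intro _ x1 x2 y
      simp only [qEx]
      refine Finset.sum_congr rfl fun j _ => ?_
      rw [Finset.sum_eq_single (bsel x1 j) (by intro b _ hb; simp [hb]) (by simp),
        Finset.sum_eq_single (bsel x2 j) (by intro b _ hb; simp [hb]) (by simp)]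
      norm_num
    · refine le_trans (le_of_eq ?_) hR1
      have hm := marg_left (pT := fun _ : Unit => 1) (pU0c := fun _ (_ : Fin 2) => 1 / 2)
        (pU1c := fun x j _ u => if u = bsel x j then 1 else 0) iU iY
        (p := pOpt) (fun _ _ _ _ _ _ _ => rfl)
      unfold cmi
      rw [ent_of_flat (fun _ => True) 2 ?_ (by simp), ent_of_flat (fun _ => True) 2 ?_ (by simp),
        ent_of_flat (fun b => b.1.2 = bsel b.2.1 b.1.1) 3 ?_ (by decide),
        ent_of_flat (fun _ => True) 0 ?_ (by simp)]
      · norm_num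
      · rintro ⟨⟩
        rw [marg_eq_sum _ (fun ω => ω.1), Fintype.sum_congr _ (fun _ => 1 / 4)]
        · norm_num
        intro x
        rw [marg_eq_sum _ (fun ω => (ω.2.2.2.1, ω.2.2.2.2.1)), Fintype.sum_prod_type]
        simp only [hm]
        norm_num
      · rintro ⟨⟨u0, u1⟩, x, t⟩
        rw [hm]
        norm_num
      · rintro ⟨x, t⟩
        rw [marg_eq_sum _ (fun ω => (ω.2.2.2.1, ω.2.2.2.2.1)), Fintype.sum_prod_type]
        simp only [hm]
        norm_num
      · rintro ⟨⟨u0, u1⟩, t⟩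
        rw [marg_pair_eq_sum _ _ (fun ω => ω.1), Fintype.sum_prod_type]
        simp only [hm]
        fin_cases u0 <;> cases u1 <;> norm_num [bsel]
    · refine le_trans (le_of_eq ?_) hR2
      have hm := marg_right (pT := fun _ : Unit => 1) (pU0c := fun _ (_ : Fin 2) => 1 / 2)
        (pU2c := fun x j _ u => if u = bsel x j then 1 else 0) iU iY
        (p := pOpt) (fun _ _ _ _ _ _ _ => rfl)
      unfold cmi
      rw [ent_of_flat (fun _ => True) 2 ?_ (by simp), ent_of_flat (fun _ => True) 2 ?_ (by simp),
        ent_of_flat (fun b => b.1.2 = bsel b.2.1 b.1.1) 3 ?_ (by decide),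
        ent_of_flat (fun _ => True) 0 ?_ (by simp)]
      · norm_num
      · rintro ⟨⟩
        rw [marg_eq_sum _ (fun ω => ω.2.1), Fintype.sum_congr _ (fun _ => 1 / 4)]
        · norm_num
        intro x
        rw [marg_eq_sum _ (fun ω => (ω.2.2.2.1, ω.2.2.2.2.2.1)), Fintype.sum_prod_type]
        simp only [hm]
        norm_num
      · rintro ⟨⟨u0, u1⟩, x, t⟩
        rw [hm]
        norm_num
      · rintro ⟨x, t⟩
        rw [marg_eq_sum _ (fun ω => (ω.2.2.2.1, ω.2.2.2.2.2.1)), Fintype.sum_prod_type]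
        simp only [hm]
        norm_num
      · rintro ⟨⟨u0, u1⟩, t⟩
        rw [marg_pair_eq_sum _ _ (fun ω => ω.2.1), Fintype.sum_prod_type]
        simp only [hm]
        fin_cases u0 <;> cases u1 <;> norm_num [bsel]
    · refine le_trans (le_of_eq ?_) (add_le_add hR1 hR2)
      have hm := marg_all (pT := fun _ : Unit => 1) (pU0c := fun _ (_ : Fin 2) => 1 / 2)
        (pU1c := fun x j _ u => if u = bsel x j then 1 else 0)
        (pU2c := fun x j _ u => if u = bsel x j then 1 else 0) iY
        (p := pOpt) (fun _ _ _ _ _ _ _ => rfl)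
      unfold cmi
      rw [ent_of_flat (fun _ => True) 3 ?_ (by simp), ent_of_flat (fun _ => True) 4 ?_ (by simp),
        ent_of_flat (fun b => b.1.2.1 = bsel b.2.1.1 b.1.1 ∧ b.1.2.2 = bsel b.2.1.2 b.1.1) 5 ?_
          (by decide),
        ent_of_flat (fun _ => True) 0 ?_ (by simp)]
      · norm_num
      · rintro ⟨⟩
        rw [marg_eq_sum _ (fun ω => (ω.1, ω.2.1)), Fintype.sum_congr _ (fun _ => 1 / 16)]
        · norm_num
        rintro ⟨x1, x2⟩
        rw [marg_eq_sum _ (fun ω => (ω.2.2.2.1, ω.2.2.2.2.1, ω.2.2.2.2.2.1))]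
        simp only [Fintype.sum_prod_type, hm]
        norm_num
      · rintro ⟨⟨u0, u1, u2⟩, ⟨x1, x2⟩, t⟩
        rw [hm]
        simp only [ite_and]
        split_ifs <;> norm_num
      · rintro ⟨⟨x1, x2⟩, t⟩
        rw [marg_eq_sum _ (fun ω => (ω.2.2.2.1, ω.2.2.2.2.1, ω.2.2.2.2.2.1))]
        simp only [Fintype.sum_prod_type, hm]
        norm_num
      · rintro ⟨⟨u0, u1, u2⟩, t⟩
        rw [marg_pair_eq_sum _ _ (fun ω => (ω.1, ω.2.1))]
        simp only [Fintype.sum_prod_type (α₁ := Bool × Bool), hm]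
        simp only [Fintype.sum_prod_type]
        fin_cases u0 <;> cases u1 <;> cases u2 <;> norm_num [bsel]
end

section
/- Information identities for deterministic functions with conditionally independent sources (Appendix D). Let 𝒳₁,𝒳₂,𝒵,𝒰₁,𝒰₂,𝒴 be finite sets and let p be a joint pmf of the form p(x₁,x₂,z,u₁,u₂,y) = p(z) p(x₁|z) p(x₂|z) p(u₁|x₁) p(u₂|x₂) p(y|u₁,u₂,z), and suppose Y is a deterministic function of (X₁,X₂,Z), i.e., H(Y|X₁,X₂,Z) = 0. Then: (i) I(U₁;X₁,Y|X₂,Z) = I(U₁;X₁|Z); (ii) I(U₂;X₂,Y|X₁,Z) = I(U₂;X₂|Z); and (iii) I(U₁,U₂;X₁,X₂,Y|Z) = I(U₁;X₁|Z) + I(U₂;X₂|Z). -/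
/-!
Given `Z`, the pairs `(X₁, U₁)` and `(X₂, U₂)` are independent. Hence, if a random variable `f`
carries the same information as `(k₁(X₁, U₁), k₂(X₂, U₂), Z)`, the mass of its value factors as
`p(z)` times a function of `(z, k₁)` times a function of `(z, k₂)`, and its entropy splits as
`H(f) = h + h₁(k₁) + h₂(k₂)`, where `h₁` depends only on the key `k₁` and `h₂` only on `k₂`
(`ent_split`). All entropies in the three identities are of this kind: `H(Y | X₁, X₂, Z) = 0`
says that, on the support of `p`, equal values of `(X₁, X₂, Z)` force equal values of `Y`
(`eq_of_condEnt_eq_zero`), so `Y` can be dropped whenever it appears next to `X₁, X₂, Z`.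
Each identity is then a linear relation between the numbers `h`, `h₁(k₁)`, `h₂(k₂)`, with
`k₁` and `k₂` among the four keys: constant, `X`, `U`, and `(X, U)`.
-/

open Finset

/-- The entropy contribution `-E[log₂ t]` of a factor `t` of the mass function. -/
noncomputable def logLoss {Ω : Type*} [Fintype Ω] (p t : Ω → ℝ) : ℝ :=
  -∑ ω, p ω * Real.logb 2 (t ω)

/-- For a source with conditional law `pX x * pU x u`, the probability that the key `k` takes
the value it has at `(x, u)`. -/
noncomputable def keyMass {X U κ : Type*} [Fintype X] [Fintype U] [DecidableEq κ]
    (pX : X → ℝ) (pU : X → U → ℝ) (k : X → U → κ) (x : X) (u : U) : ℝ :=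
  ∑ x', ∑ u', if k x' u' = k x u then pX x' * pU x' u' else 0

lemma keyMass_pos {X U κ : Type*} [Fintype X] [Fintype U] [DecidableEq κ]
    {pX : X → ℝ} {pU : X → U → ℝ} (k : X → U → κ) {x : X} {u : U}
    (hX : ∀ x, 0 ≤ pX x) (hU : ∀ x u, 0 ≤ pU x u) (h : pX x * pU x u ≠ 0) :
    0 < keyMass pX pU k x u := by
  have hn : ∀ x' u', 0 ≤ if k x' u' = k x u then pX x' * pU x' u' else 0 := by
    intro x' u'
    split_ifs
    · exact mul_nonneg (hX _) (hU _ _)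
    · exact le_rfl
  have h0 : 0 < pX x * pU x u := lt_of_le_of_ne (mul_nonneg (hX _) (hU _ _)) h.symm
  calc 0 < pX x * pU x u := h0
    _ = if k x u = k x u then pX x * pU x u else 0 := by simp
    _ ≤ ∑ u', if k x u' = k x u then pX x * pU x u' else 0 :=
        Finset.single_le_sum (f := fun u' => if k x u' = k x u then pX x * pU x u' else 0)
          (fun u' _ => hn x u') (Finset.mem_univ u)
    _ ≤ keyMass pX pU k x u :=
        Finset.single_le_sum
          (f := fun x' => ∑ u', if k x' u' = k x u then pX x' * pU x' u' else 0)
          (fun x' _ => Finset.sum_nonneg fun u' _ => hn x' u') (Finset.mem_univ x)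

lemma ent_eq_logLoss {Ω β : Type*} [Fintype Ω] [Fintype β] [DecidableEq β]
    (p : Ω → ℝ) (f : Ω → β) : ent p f = logLoss p (fun ω => marg p f (f ω)) := by
  unfold ent entPMF logLoss
  congr 1
  have h : ∀ b, marg p f b * Real.logb 2 (marg p f b)
      = ∑ ω, if f ω = b then p ω * Real.logb 2 (marg p f b) else 0 := by
    intro b
    conv_lhs => enter [1]; unfold marg
    rw [Finset.sum_mul]
    exact Finset.sum_congr rfl fun ω _ => by split_ifs <;> simp
  rw [Finset.sum_congr rfl fun b _ => h b, Finset.sum_comm]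
  exact Finset.sum_congr rfl fun ω _ => by simp

/-- `H(f | g) = 0` makes `f` a function of `g` on the support: `H(f | g)` is the average of
the nonnegative quantity `log (P(g) / P(f, g))`, which must therefore vanish on the support;
then no mass with the same `g` is left for another value of `f`. -/
lemma eq_of_condEnt_eq_zero {Ω β γ : Type*} [Fintype Ω] [Fintype β] [Fintype γ]
    [DecidableEq β] [DecidableEq γ] {p : Ω → ℝ} (hp : ∀ ω, 0 ≤ p ω) {f : Ω → β} {g : Ω → γ}
    (h : condEnt p f g = 0) {ω ω' : Ω} (hω : p ω ≠ 0) (hω' : p ω' ≠ 0) (hg : g ω = g ω') :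
    f ω = f ω' := by
  have hle : ∀ ω, ∀ ω'', (if (f ω'', g ω'') = (f ω, g ω) then p ω'' else 0)
      ≤ if g ω'' = g ω then p ω'' else 0 := by
    intro ω ω''
    have := hp ω''
    by_cases h1 : g ω'' = g ω <;> by_cases h2 : f ω'' = f ω <;> simp [h1, h2, this]
  have hpos : ∀ ω, p ω ≠ 0 → 0 < marg p (fun ω => (f ω, g ω)) (f ω, g ω) := by
    intro ω hω
    refine Finset.sum_pos' (fun ω'' _ => ?_) ⟨ω, Finset.mem_univ _, ?_⟩
    · split_ifs
      · exact hp _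
      · exact le_rfl
    · simpa using lt_of_le_of_ne (hp ω) hω.symm
  have hmle : ∀ ω, marg p (fun ω => (f ω, g ω)) (f ω, g ω) ≤ marg p g (g ω) := fun ω =>
    Finset.sum_le_sum fun ω'' _ => hle ω ω''
  have hsum : ∑ ω, p ω * (Real.logb 2 (marg p g (g ω))
      - Real.logb 2 (marg p (fun ω => (f ω, g ω)) (f ω, g ω))) = 0 := by
    unfold condEnt at h
    rw [ent_eq_logLoss, ent_eq_logLoss] at h
    unfold logLoss at h
    simp only [mul_sub, Finset.sum_sub_distrib]
    linarith
  have hterm : ∀ ω ∈ Finset.univ, 0 ≤ p ω * (Real.logb 2 (marg p g (g ω))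
      - Real.logb 2 (marg p (fun ω => (f ω, g ω)) (f ω, g ω))) := by
    intro ω _
    by_cases h0 : p ω = 0
    · simp [h0]
    · exact mul_nonneg (hp ω) (sub_nonneg.2
        (Real.logb_le_logb_of_le one_lt_two (hpos ω h0) (hmle ω)))
  have h1 := (Finset.sum_eq_zero_iff_of_nonneg hterm).1 hsum ω (Finset.mem_univ _)
  have h2 : marg p (fun ω => (f ω, g ω)) (f ω, g ω) = marg p g (g ω) := by
    refine Real.logb_injOn_pos one_lt_two (hpos ω hω) ((hpos ω hω).trans_le (hmle ω)) ?_
    have := (mul_eq_zero.1 h1).resolve_left hω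
    linarith
  have h3 := (Finset.sum_eq_sum_iff_of_le fun ω'' _ => hle ω ω'').1 h2 ω' (Finset.mem_univ _)
  by_contra hne
  have hne' : f ω' ≠ f ω := fun e => hne e.symm
  simp [hg, hne'] at h3
  exact hω' h3.symm

/-- A variable that, on the support of `p`, determines and is determined by
`(k₁(X₁, U₁), k₂(X₂, U₂), Z)` has entropy equal to a sum of one term per factor. -/
lemma ent_split {X1 X2 Z U1 U2 Y β κ₁ κ₂ : Type*}
    [Fintype X1] [Fintype X2] [Fintype Z] [Fintype U1] [Fintype U2] [Fintype Y] [Fintype β]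
    [DecidableEq Z] [DecidableEq β] [DecidableEq κ₁] [DecidableEq κ₂]
    {pZ : Z → ℝ} {pX1c : Z → X1 → ℝ} {pX2c : Z → X2 → ℝ}
    {pU1c : X1 → U1 → ℝ} {pU2c : X2 → U2 → ℝ} {pYc : U1 → U2 → Z → Y → ℝ}
    (hX1 : ∀ z, IsPMF (pX1c z)) (hX2 : ∀ z, IsPMF (pX2c z))
    (hU1 : ∀ x1, IsPMF (pU1c x1)) (hU2 : ∀ x2, IsPMF (pU2c x2))
    (hY : ∀ u1 u2 z, IsPMF (pYc u1 u2 z))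
    {p : X1 × X2 × Z × U1 × U2 × Y → ℝ}
    (hpdef : ∀ x1 x2 z u1 u2 y,
      p (x1, x2, z, u1, u2, y) =
        pZ z * pX1c z x1 * pX2c z x2 * pU1c x1 u1 * pU2c x2 u2 * pYc u1 u2 z y)
    (k₁ : X1 → U1 → κ₁) (k₂ : X2 → U2 → κ₂) (f : X1 × X2 × Z × U1 × U2 × Y → β)
    (hf : ∀ ω ω', p ω ≠ 0 → p ω' ≠ 0 → (f ω' = f ω ↔
      k₁ ω'.1 ω'.2.2.2.1 = k₁ ω.1 ω.2.2.2.1 ∧ k₂ ω'.2.1 ω'.2.2.2.2.1 = k₂ ω.2.1 ω.2.2.2.2.1 ∧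
        ω'.2.2.1 = ω.2.2.1)) :
    ent p f = logLoss p (fun ω => pZ ω.2.2.1)
      + logLoss p (fun ω => keyMass (pX1c ω.2.2.1) pU1c k₁ ω.1 ω.2.2.2.1)
      + logLoss p (fun ω => keyMass (pX2c ω.2.2.1) pU2c k₂ ω.2.1 ω.2.2.2.2.1) := by
  have hm : ∀ ω, p ω ≠ 0 → marg p f (f ω) = pZ ω.2.2.1
      * keyMass (pX1c ω.2.2.1) pU1c k₁ ω.1 ω.2.2.2.1
      * keyMass (pX2c ω.2.2.1) pU2c k₂ ω.2.1 ω.2.2.2.2.1 := by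
    rintro ⟨x1, x2, z, u1, u2, y⟩ hω
    -- The indicator of `f ω' = f ω` may be replaced by the product of three indicators.
    have h1 : marg p f (f (x1, x2, z, u1, u2, y)) = ∑ ω' : X1 × X2 × Z × U1 × U2 × Y,
        (if ω'.2.2.1 = z then pZ z else 0)
        * (if k₁ ω'.1 ω'.2.2.2.1 = k₁ x1 u1 then pX1c z ω'.1 * pU1c ω'.1 ω'.2.2.2.1 else 0)
        * (if k₂ ω'.2.1 ω'.2.2.2.2.1 = k₂ x2 u2 then
            pX2c z ω'.2.1 * pU2c ω'.2.1 ω'.2.2.2.2.1 else 0)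
        * pYc ω'.2.2.2.1 ω'.2.2.2.2.1 z ω'.2.2.2.2.2 := by
      refine Finset.sum_congr rfl fun ω' _ => ?_
      have h2 : (if f ω' = f (x1, x2, z, u1, u2, y) then p ω' else 0) =
          if k₁ ω'.1 ω'.2.2.2.1 = k₁ x1 u1 ∧ k₂ ω'.2.1 ω'.2.2.2.2.1 = k₂ x2 u2 ∧
            ω'.2.2.1 = z then p ω' else 0 := by
        by_cases h0 : p ω' = 0
        · simp [h0]
        · exact if_congr (hf _ ω' hω h0) rfl rfl
      rw [h2]
      obtain ⟨x1', x2', z', u1', u2', y'⟩ := ω'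
      dsimp only
      rw [hpdef]
      by_cases ha : z' = z
      · subst ha
        by_cases hb : k₁ x1' u1' = k₁ x1 u1 <;> by_cases hc : k₂ x2' u2' = k₂ x2 u2 <;>
          simp only [hb, hc, and_true, and_false, if_true, if_false, mul_zero, zero_mul]
        ring
      · simp [ha]
    rw [h1]
    simp only [Fintype.sum_prod_type]
    unfold keyMass
    generalize hA : (fun x' u' => if k₁ x' u' = k₁ x1 u1 then pX1c z x' * pU1c x' u' else 0) = A
    generalize hB : (fun x' u' => if k₂ x' u' = k₂ x2 u2 then pX2c z x' * pU2c x' u' else 0) = B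
    simp only [funext_iff] at hA hB
    simp only [hA, hB]
    have hS : ∀ (w : ℝ) u1' u2', ∑ y', w * pYc u1' u2' z y' = w := by
      intro w u1' u2'
      rw [← Finset.mul_sum, (hY u1' u2' z).2, mul_one]
    have h3 : ∀ x1' x2', ∑ z', ∑ u1', ∑ u2', ∑ y',
        (if z' = z then pZ z else 0) * A x1' u1' * B x2' u2' * pYc u1' u2' z y'
        = pZ z * ((∑ u1', A x1' u1') * ∑ u2', B x2' u2') := by
      intro x1' x2'
      simp only [hS]
      rw [Finset.sum_eq_single z]
      · rw [Finset.sum_mul_sum]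
        simp only [if_true, Finset.mul_sum, mul_assoc]
      · intro z' _ hz'
        simp [hz']
      · simp
    simp only [h3, ← Finset.mul_sum]
    rw [mul_assoc, Finset.sum_mul]
  rw [ent_eq_logLoss]
  unfold logLoss
  rw [← neg_add, ← neg_add, ← Finset.sum_add_distrib, ← Finset.sum_add_distrib]
  congr 1
  refine Finset.sum_congr rfl fun ω _ => ?_
  by_cases h0 : p ω = 0
  · simp [h0]
  beta_reduce
  rw [hm ω h0]
  obtain ⟨x1, x2, z, u1, u2, y⟩ := ω
  have hne := h0
  rw [hpdef] at hne
  simp only [mul_ne_zero_iff] at hne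
  obtain ⟨⟨⟨⟨⟨hz, hx1⟩, hx2⟩, hu1⟩, hu2⟩, -⟩ := hne
  have hk1 := keyMass_pos k₁ (hX1 z).1 (fun x => (hU1 x).1) (mul_ne_zero hx1 hu1)
  have hk2 := keyMass_pos k₂ (hX2 z).1 (fun x => (hU2 x).1) (mul_ne_zero hx2 hu2)
  dsimp only
  rw [Real.logb_mul (mul_ne_zero hz hk1.ne') hk2.ne', Real.logb_mul hz hk1.ne']
  ring

/-- **Information identities for deterministic functions with conditionally independent
sources (Appendix D).**  For any joint pmf
`p(x₁,x₂,z,u₁,u₂,y) = p(z) p(x₁|z) p(x₂|z) p(u₁|x₁) p(u₂|x₂) p(y|u₁,u₂,z)` with `Y` a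
deterministic function of `(X₁,X₂,Z)`:
(i) `I(U₁;X₁,Y|X₂,Z) = I(U₁;X₁|Z)`;
(ii) `I(U₂;X₂,Y|X₁,Z) = I(U₂;X₂|Z)`;
(iii) `I(U₁,U₂;X₁,X₂,Y|Z) = I(U₁;X₁|Z) + I(U₂;X₂|Z)`. -/
theorem det_function_identities_cond_indep
    {X1 X2 Z U1 U2 Y : Type}
    [Fintype X1] [Fintype X2] [Fintype Z] [Fintype U1] [Fintype U2] [Fintype Y]
    [DecidableEq X1] [DecidableEq X2] [DecidableEq Z]
    [DecidableEq U1] [DecidableEq U2] [DecidableEq Y]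
    (pZ : Z → ℝ) (pX1c : Z → X1 → ℝ) (pX2c : Z → X2 → ℝ)
    (pU1c : X1 → U1 → ℝ) (pU2c : X2 → U2 → ℝ) (pYc : U1 → U2 → Z → Y → ℝ)
    (hZ : IsPMF pZ) (hX1 : ∀ z, IsPMF (pX1c z)) (hX2 : ∀ z, IsPMF (pX2c z))
    (hU1 : ∀ x1, IsPMF (pU1c x1)) (hU2 : ∀ x2, IsPMF (pU2c x2))
    (hY : ∀ u1 u2 z, IsPMF (pYc u1 u2 z))
    (p : X1 × X2 × Z × U1 × U2 × Y → ℝ)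
    (hpdef : ∀ x1 x2 z u1 u2 y,
      p (x1, x2, z, u1, u2, y) =
        pZ z * pX1c z x1 * pX2c z x2 * pU1c x1 u1 * pU2c x2 u2 * pYc u1 u2 z y)
    (hdet : condEnt p (fun ω => ω.2.2.2.2.2) (fun ω => (ω.1, ω.2.1, ω.2.2.1)) = 0) :
    cmi p (fun ω => ω.2.2.2.1) (fun ω => (ω.1, ω.2.2.2.2.2))
        (fun ω => (ω.2.1, ω.2.2.1))
      = cmi p (fun ω => ω.2.2.2.1) (fun ω => ω.1) (fun ω => ω.2.2.1) ∧
    cmi p (fun ω => ω.2.2.2.2.1) (fun ω => (ω.2.1, ω.2.2.2.2.2))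
        (fun ω => (ω.1, ω.2.2.1))
      = cmi p (fun ω => ω.2.2.2.2.1) (fun ω => ω.2.1) (fun ω => ω.2.2.1) ∧
    cmi p (fun ω => (ω.2.2.2.1, ω.2.2.2.2.1)) (fun ω => (ω.1, ω.2.1, ω.2.2.2.2.2))
        (fun ω => ω.2.2.1)
      = cmi p (fun ω => ω.2.2.2.1) (fun ω => ω.1) (fun ω => ω.2.2.1)
        + cmi p (fun ω => ω.2.2.2.2.1) (fun ω => ω.2.1) (fun ω => ω.2.2.1) := by
  have hp : ∀ ω, 0 ≤ p ω := by
    rintro ⟨x1, x2, z, u1, u2, y⟩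
    rw [hpdef]
    have := hZ.1 z
    have := (hX1 z).1 x1
    have := (hX2 z).1 x2
    have := (hU1 x1).1 u1
    have := (hU2 x2).1 u2
    have := (hY u1 u2 z).1 y
    positivity
  have hdet' : ∀ ω ω', p ω ≠ 0 → p ω' ≠ 0 → ω'.1 = ω.1 → ω'.2.1 = ω.2.1 →
      ω'.2.2.1 = ω.2.2.1 → ω'.2.2.2.2.2 = ω.2.2.2.2.2 := fun ω ω' h h' h1 h2 h3 =>
    eq_of_condEnt_eq_zero hp hdet h' h (by simp only [h1, h2, h3])
  -- The four keys of each source: constant, `X`, `U`, `(X, U)`.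
  let c1 : X1 → U1 → Unit := fun _ _ => ()
  let a1 : X1 → U1 → X1 := fun x _ => x
  let b1 : X1 → U1 → U1 := fun _ u => u
  let d1 : X1 → U1 → X1 × U1 := fun x u => (x, u)
  let c2 : X2 → U2 → Unit := fun _ _ => ()
  let a2 : X2 → U2 → X2 := fun x _ => x
  let b2 : X2 → U2 → U2 := fun _ u => u
  let d2 : X2 → U2 → X2 × U2 := fun x u => (x, u)
  unfold cmi
  have e1 := ent_split hX1 hX2 hU1 hU2 hY hpdef b1 a2
    (fun ω => (ω.2.2.2.1, (ω.2.1, ω.2.2.1))) (by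
      intro ω ω' _ _
      simp only [Prod.mk.injEq, b1, a2])
  have e2 := ent_split hX1 hX2 hU1 hU2 hY hpdef a1 a2
    (fun ω => ((ω.1, ω.2.2.2.2.2), (ω.2.1, ω.2.2.1))) (by
      intro ω ω' h h'
      have := hdet' ω ω' h h'
      simp only [Prod.mk.injEq, a1, a2]
      tauto)
  have e3 := ent_split hX1 hX2 hU1 hU2 hY hpdef d1 a2
    (fun ω => (ω.2.2.2.1, (ω.1, ω.2.2.2.2.2), (ω.2.1, ω.2.2.1))) (by
      intro ω ω' h h'
      have := hdet' ω ω' h h'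
      simp only [Prod.mk.injEq, d1, a2]
      tauto)
  have e4 := ent_split hX1 hX2 hU1 hU2 hY hpdef c1 a2
    (fun ω => (ω.2.1, ω.2.2.1)) (by
      intro ω ω' _ _
      simp only [Prod.mk.injEq, c1, a2]
      tauto)
  have e5 := ent_split hX1 hX2 hU1 hU2 hY hpdef b1 c2
    (fun ω => (ω.2.2.2.1, ω.2.2.1)) (by
      intro ω ω' _ _
      simp only [Prod.mk.injEq, b1, c2]
      tauto)
  have e6 := ent_split hX1 hX2 hU1 hU2 hY hpdef a1 c2
    (fun ω => (ω.1, ω.2.2.1)) (by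
      intro ω ω' _ _
      simp only [Prod.mk.injEq, a1, c2]
      tauto)
  have e7 := ent_split hX1 hX2 hU1 hU2 hY hpdef d1 c2
    (fun ω => (ω.2.2.2.1, ω.1, ω.2.2.1)) (by
      intro ω ω' _ _
      simp only [Prod.mk.injEq, d1, c2]
      tauto)
  have e8 := ent_split hX1 hX2 hU1 hU2 hY hpdef c1 c2
    (fun ω => ω.2.2.1) (by
      intro ω ω' _ _
      simp only [c1, c2]
      tauto)
  have e9 := ent_split hX1 hX2 hU1 hU2 hY hpdef a1 b2
    (fun ω => (ω.2.2.2.2.1, (ω.1, ω.2.2.1))) (by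
      intro ω ω' _ _
      simp only [Prod.mk.injEq, a1, b2]
      tauto)
  have e10 := ent_split hX1 hX2 hU1 hU2 hY hpdef a1 a2
    (fun ω => ((ω.2.1, ω.2.2.2.2.2), (ω.1, ω.2.2.1))) (by
      intro ω ω' h h'
      have := hdet' ω ω' h h'
      simp only [Prod.mk.injEq, a1, a2]
      tauto)
  have e11 := ent_split hX1 hX2 hU1 hU2 hY hpdef a1 d2
    (fun ω => (ω.2.2.2.2.1, (ω.2.1, ω.2.2.2.2.2), (ω.1, ω.2.2.1))) (by
      intro ω ω' h h'
      have := hdet' ω ω' h h'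
      simp only [Prod.mk.injEq, a1, d2]
      tauto)
  have e12 := ent_split hX1 hX2 hU1 hU2 hY hpdef c1 b2
    (fun ω => (ω.2.2.2.2.1, ω.2.2.1)) (by
      intro ω ω' _ _
      simp only [Prod.mk.injEq, c1, b2]
      tauto)
  have e13 := ent_split hX1 hX2 hU1 hU2 hY hpdef c1 d2
    (fun ω => (ω.2.2.2.2.1, ω.2.1, ω.2.2.1)) (by
      intro ω ω' _ _
      simp only [Prod.mk.injEq, c1, d2]
      tauto)
  have e14 := ent_split hX1 hX2 hU1 hU2 hY hpdef b1 b2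
    (fun ω => ((ω.2.2.2.1, ω.2.2.2.2.1), ω.2.2.1)) (by
      intro ω ω' _ _
      simp only [Prod.mk.injEq, b1, b2]
      tauto)
  have e15 := ent_split hX1 hX2 hU1 hU2 hY hpdef a1 a2
    (fun ω => ((ω.1, ω.2.1, ω.2.2.2.2.2), ω.2.2.1)) (by
      intro ω ω' h h'
      have := hdet' ω ω' h h'
      simp only [Prod.mk.injEq, a1, a2]
      tauto)
  have e16 := ent_split hX1 hX2 hU1 hU2 hY hpdef d1 d2
    (fun ω => ((ω.2.2.2.1, ω.2.2.2.2.1), (ω.1, ω.2.1, ω.2.2.2.2.2), ω.2.2.1)) (by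
      intro ω ω' h h'
      have := hdet' ω ω' h h'
      simp only [Prod.mk.injEq, d1, d2]
      tauto)
  simp only [e1, e2, e3, e4, e5, e6, e7, e8, e9, e10, e11, e12, e13, e14, e15, e16]
  refine ⟨?_, ?_, ?_⟩ <;> ring
end
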